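/- In dimension 11, every finite set S of points on the unit sphere of EuclideanSpace ℝ (Fin 11) (i.e., ‖x‖ = 1 for all x ∈ S) such that any two distinct points of S are at Euclidean distance at least 1 has cardinality at most 870; that is, the kissing number in dimension 11 is at most 870. -/

import Mathlib

/-!
The bound is the three-point semidefinite programming bound of Bachoc and Vallentin. For a unit
vector `z`, the kernel `∑ₖ pₖ(⟪x, z⟫, ⟪y, z⟫) Zₖ(x, y; z)` is positive semidefinite if every `pₖ`
is, where `Zₖ` is the zonal form of degree `k` of the orthogonal projections of `x` and `y` to
`zᗮ`. Summing it over all triples of points of `S`, and adding a positive semidefinite zonal kernel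
of pairs, gives a nonnegative number. Upper bounds for the contributions of a point, of a pair and
of a triple of distinct points therefore combine into a quadratic inequality for `#S`, and for a
suitable choice of the `pₖ` it fails at `#S = 871`.

The contributions of pairs and triples are polynomials in inner products that lie in `[-1, 1 / 2]`.
They are bounded by branch and bound: on each dyadic box, a polynomial is at most the largest of its
Bernstein coefficients, and boxes that contain no positive semidefinite Gram matrix are discarded.
To make this feasible by kernel reduction, all coefficients of a polynomial are packed into the
binary digits of one natural number, which is obtained by evaluating the polynomial at powers of two
(Kronecker substitution) and on which a bisection takes a few shifts and additions.
-/

open MvPolynomial Finset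
open scoped Nat RealInnerProductSpace

namespace KissingNumber

/-! ### The Fischer inner product and zonal harmonics -/

section Fischer

variable {σ : Type*} [Fintype σ]

/-- The Fischer inner product of polynomials, for which distinct monomials are orthogonal, `X ^ α`
has square length `α!`, and multiplication by `X i` is adjoint to `∂ / ∂ X i`. -/
noncomputable def fischer : MvPolynomial σ ℝ →ₗ[ℝ] MvPolynomial σ ℝ →ₗ[ℝ] ℝ :=
  (basisMonomials σ ℝ).constr ℝ fun α => (∏ i, ((α i)! : ℝ)) • lcoeff ℝ α

lemma fischer_monomial (α : σ →₀ ℕ) (c : ℝ) (q : MvPolynomial σ ℝ) :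
    fischer (monomial α c) q = c * ((∏ i, ((α i)! : ℝ)) * coeff α q) := by
  have hone : fischer (monomial α 1) = (∏ i, ((α i)! : ℝ)) • lcoeff ℝ α := by
    simpa only [fischer, coe_basisMonomials] using (basisMonomials σ ℝ).constr_basis ℝ _ α
  rw [← mul_one c, ← smul_eq_mul, ← smul_monomial, map_smul, hone]
  simp

lemma fischer_eq_sum (p q : MvPolynomial σ ℝ) :
    fischer p q = ∑ α ∈ p.support, coeff α p * ((∏ i, ((α i)! : ℝ)) * coeff α q) := by
  conv_lhs => rw [p.as_sum, map_sum, LinearMap.sum_apply]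
  simp only [fischer_monomial]

lemma fischer_self_nonneg (p : MvPolynomial σ ℝ) : 0 ≤ fischer p p := by
  rw [fischer_eq_sum]
  refine sum_nonneg fun α _ => ?_
  rw [mul_left_comm]
  exact mul_nonneg (by positivity) (mul_self_nonneg _)

lemma fischer_comm (p q : MvPolynomial σ ℝ) : fischer p q = fischer q p := by
  classical
  suffices h : (fischer : MvPolynomial σ ℝ →ₗ[ℝ] _) = fischer.flip from
    congr($h p q)
  refine (basisMonomials σ ℝ).ext fun α => (basisMonomials σ ℝ).ext fun β => ?_
  rw [coe_basisMonomials, LinearMap.flip_apply, fischer_monomial, fischer_monomial, coeff_monomial,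
    coeff_monomial]
  by_cases h : α = β
  · rw [h]
  · simp [h, Ne.symm h]

lemma fischer_C_mul (c : ℝ) (p q : MvPolynomial σ ℝ) :
    fischer (C c * p) q = c * fischer p q := by
  rw [← smul_eq_C_mul, map_smul, LinearMap.smul_apply, smul_eq_mul]

lemma fischer_C_mul_right (c : ℝ) (p q : MvPolynomial σ ℝ) :
    fischer p (C c * q) = c * fischer p q := by
  rw [fischer_comm, fischer_C_mul, fischer_comm]

lemma prod_factorial_add_single (α : σ →₀ ℕ) (i : σ) :
    ∏ j, (((α + Finsupp.single i 1 : σ →₀ ℕ) j)! : ℝ) = (α i + 1) * ∏ j, ((α j)! : ℝ) := by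
  classical
  have hrest : ∏ j ∈ univ.erase i, (((α + Finsupp.single i 1 : σ →₀ ℕ) j)! : ℝ) =
      ∏ j ∈ univ.erase i, ((α j)! : ℝ) :=
    prod_congr rfl fun j hj => by simp [ne_of_mem_erase hj]
  rw [← mul_prod_erase univ _ (mem_univ i), hrest,
    ← mul_prod_erase univ (fun j => ((α j)! : ℝ)) (mem_univ i), ← mul_assoc]
  simp [Nat.factorial_succ]

lemma fischer_X_mul (i : σ) (p q : MvPolynomial σ ℝ) :
    fischer (X i * p) q = fischer p (pderiv i q) := by
  induction p using MvPolynomial.induction_on' with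
  | monomial α c =>
    rw [X, monomial_mul, one_mul, add_comm, fischer_monomial, fischer_monomial, coeff_pderiv,
      prod_factorial_add_single]
    ring
  | add p p' hp hp' => simp only [mul_add, map_add, LinearMap.add_apply, hp, hp']

/-- The linear form `∑ i, y i * X i`. -/
noncomputable def linearForm (y : σ → ℝ) : MvPolynomial σ ℝ := ∑ i, C (y i) * X i

/-- The squared Euclidean norm `∑ i, X i ^ 2` as a polynomial. -/
noncomputable def normSq : MvPolynomial σ ℝ := ∑ i, X i * X i

/-- The Laplacian `∑ i, ∂² / ∂ X i ²` on polynomials. -/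
noncomputable def laplacian : MvPolynomial σ ℝ →ₗ[ℝ] MvPolynomial σ ℝ :=
  ∑ i, (pderiv i).toLinearMap ∘ₗ (pderiv i).toLinearMap

lemma laplacian_apply (q : MvPolynomial σ ℝ) :
    laplacian q = ∑ i, pderiv i (pderiv i q) := by
  simp [laplacian]

lemma fischer_linearForm_mul (y : σ → ℝ) (p q : MvPolynomial σ ℝ) :
    fischer (linearForm y * p) q = fischer p (∑ i, C (y i) * pderiv i q) := by
  rw [linearForm, sum_mul, map_sum, map_sum, LinearMap.sum_apply]
  refine sum_congr rfl fun i _ => ?_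
  rw [mul_assoc, fischer_C_mul, fischer_X_mul, fischer_C_mul_right]

lemma fischer_normSq_mul (p q : MvPolynomial σ ℝ) :
    fischer (normSq * p) q = fischer p (laplacian q) := by
  rw [normSq, laplacian_apply, sum_mul, map_sum, map_sum, LinearMap.sum_apply]
  exact sum_congr rfl fun i _ => by rw [mul_assoc, fischer_X_mul, fischer_X_mul]

lemma pderiv_linearForm (i : σ) (y : σ → ℝ) : pderiv i (linearForm y) = C (y i) := by
  classical
  simp [linearForm, pderiv_X, Pi.single_apply]

lemma pderiv_normSq (i : σ) : pderiv i (normSq : MvPolynomial σ ℝ) = 2 * X i := by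
  classical
  simp [normSq, pderiv_X, Pi.single_apply, sum_add_distrib, two_mul]

lemma pderiv_linearForm_pow (i : σ) (y : σ → ℝ) (a : ℕ) :
    pderiv i (linearForm y ^ a) = C (a * y i : ℝ) * linearForm y ^ (a - 1) := by
  rw [pderiv_pow, pderiv_linearForm, C_mul, map_natCast]
  ring

lemma pderiv_normSq_pow (i : σ) (j : ℕ) :
    pderiv i (normSq ^ j : MvPolynomial σ ℝ) = C (2 * j : ℝ) * X i * normSq ^ (j - 1) := by
  rw [pderiv_pow, pderiv_normSq, C_mul, map_natCast, map_ofNat]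
  ring

lemma pderiv_pderiv_linearForm_pow_mul_normSq_pow (i : σ) (y : σ → ℝ) (a j : ℕ) :
    pderiv i (pderiv i (linearForm y ^ a * normSq ^ j)) =
      C (a * (a - 1 : ℕ) : ℝ) * linearForm y ^ (a - 2) * normSq ^ j * C (y i * y i) +
      C (4 * a * j : ℝ) * linearForm y ^ (a - 1) * normSq ^ (j - 1) * (C (y i) * X i) +
      C (2 * j : ℝ) * linearForm y ^ a * normSq ^ (j - 1) +
      C (4 * j * (j - 1 : ℕ) : ℝ) * linearForm y ^ a * normSq ^ (j - 2) * (X i * X i) := by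
  simp only [Derivation.leibniz, pderiv_linearForm_pow, pderiv_normSq_pow, pderiv_C, smul_eq_mul,
    map_add, pderiv_X_self, Nat.sub_sub]
  simp only [map_mul, map_natCast, map_ofNat]
  ring

lemma laplacian_linearForm_pow_mul_normSq_pow (y : σ → ℝ) (a j : ℕ) :
    laplacian (linearForm y ^ a * normSq ^ j) =
      C (a * (a - 1 : ℕ) * (y ⬝ᵥ y)) * (linearForm y ^ (a - 2) * normSq ^ j) +
      C (2 * j * (2 * j + Fintype.card σ - 2 + 2 * a) : ℝ) *
        (linearForm y ^ a * normSq ^ (j - 1)) := by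
  have hlin : C (4 * a * j : ℝ) * linearForm y ^ (a - 1) * normSq ^ (j - 1) * linearForm y =
      C (4 * a * j : ℝ) * linearForm y ^ a * normSq ^ (j - 1) := by
    rcases a with _ | a
    · simp
    · simp only [Nat.add_sub_cancel]; ring
  have hsq : C (4 * j * (j - 1 : ℕ) : ℝ) * linearForm y ^ a * normSq ^ (j - 2) * normSq =
      C (4 * j * (j - 1) : ℝ) * linearForm y ^ a * normSq ^ (j - 1) := by
    rcases j with _ | _ | j
    · simp
    · simp
    · simp only [Nat.add_one_sub_one, Nat.cast_add, Nat.cast_one,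
        add_sub_cancel_right, Nat.reduceSubDiff]
      ring
  rw [laplacian_apply]
  simp only [pderiv_pderiv_linearForm_pow_mul_normSq_pow, sum_add_distrib, ← mul_sum]
  rw [← linearForm, ← normSq, ← map_sum, ← dotProduct, hlin, hsq, sum_const, card_univ,
    nsmul_eq_mul]
  simp only [map_mul, map_add, map_sub, map_natCast, map_ofNat, map_one]
  ring

lemma laplacian_linearForm_pow (x : σ → ℝ) (a : ℕ) :
    laplacian (linearForm x ^ (a + 2)) =
      C ((a + 2) * (a + 1) * (x ⬝ᵥ x)) * linearForm x ^ a := by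
  simpa using laplacian_linearForm_pow_mul_normSq_pow x (a + 2) 0

lemma fischer_linearForm_pow (x y : σ → ℝ) (a : ℕ) :
    fischer (linearForm x ^ a) (linearForm y ^ a) = a ! * (x ⬝ᵥ y) ^ a := by
  induction a with
  | zero =>
    rw [pow_zero, pow_zero, ← C_1, C_apply, fischer_monomial]
    simp
  | succ a ih =>
    have hderiv : ∑ i, C (x i) * pderiv i (linearForm y ^ (a + 1)) =
        C ((a + 1) * (x ⬝ᵥ y)) * linearForm y ^ a := by
      simp only [pderiv_linearForm_pow, Nat.add_sub_cancel, dotProduct, mul_sum, map_sum, sum_mul]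
      refine sum_congr rfl fun i _ => ?_
      simp only [map_mul, map_natCast, map_add, map_one, Nat.cast_add, Nat.cast_one]
      ring
    rw [pow_succ', fischer_linearForm_mul, hderiv, fischer_C_mul_right, ih, Nat.factorial_succ]
    push_cast
    ring

lemma fischer_linearForm_pow_mul_normSq_pow (x y : σ → ℝ) (a j : ℕ) :
    fischer (linearForm y ^ a * normSq ^ j) (linearForm x ^ (a + 2 * j)) =
      (a + 2 * j)! * (y ⬝ᵥ x) ^ a * (x ⬝ᵥ x) ^ j := by
  induction j with
  | zero => simpa using fischer_linearForm_pow y x a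
  | succ j ih =>
    rw [show linearForm y ^ a * normSq ^ (j + 1) = normSq * (linearForm y ^ a * normSq ^ j) by ring,
      fischer_normSq_mul, mul_add_one, ← add_assoc, laplacian_linearForm_pow,
      fischer_C_mul_right, ih, Nat.factorial_succ, Nat.factorial_succ]
    push_cast
    ring

/-- The binary form `∑ j, γ j * w ^ (k - 2 * j) * r ^ j`. With `w = ⟪x, y⟫` and
`r = ‖x‖ ^ 2 * ‖y‖ ^ 2`, and coefficients as in `IsZonalSeq`, this is the zonal harmonic of degree
`k`, i.e. a positive multiple of the homogenized Gegenbauer polynomial. -/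
def zonalForm {R : Type*} [CommRing R] (γ : ℕ → R) (k : ℕ) (w r : R) : R :=
  ∑ j ∈ range (k / 2 + 1), γ j * (w ^ (k - 2 * j) * r ^ j)

/-- The recurrence which makes `zonalForm γ k` harmonic in dimension `m`, together with the sign
normalization of its leading coefficient. -/
structure IsZonalSeq (m k : ℕ) (γ : ℕ → ℝ) : Prop where
  pos : 0 < γ 0
  recurrence : ∀ j, 2 * j + 2 ≤ k →
    γ (j + 1) * (2 * (j + 1) * (2 * k - 2 * j + m - 4)) = -γ j * ((k - 2 * j) * (k - 2 * j - 1))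

/-- The zonal harmonic polynomial of degree `k` with pole `y`. -/
noncomputable def zonalPoly (γ : ℕ → ℝ) (k : ℕ) (y : σ → ℝ) : MvPolynomial σ ℝ :=
  ∑ j ∈ range (k / 2 + 1), C (γ j * (y ⬝ᵥ y) ^ j) * (linearForm y ^ (k - 2 * j) * normSq ^ j)

variable {γ : ℕ → ℝ} {k : ℕ}

lemma laplacian_zonalPoly (hγ : IsZonalSeq (Fintype.card σ) k γ) (y : σ → ℝ) :
    laplacian (zonalPoly γ k y) = 0 := by
  have hlast : ((k - 2 * (k / 2) : ℕ) * (k - 2 * (k / 2) - 1 : ℕ) : ℝ) = 0 := by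
    rcases Nat.mod_two_eq_zero_or_one k with h | h
    · rw [show k - 2 * (k / 2) = 0 by omega, Nat.cast_zero, zero_mul]
    · rw [show k - 2 * (k / 2) - 1 = 0 by omega, Nat.cast_zero, mul_zero]
  simp only [zonalPoly, map_sum, ← smul_eq_C_mul, map_smul]
  simp only [smul_eq_C_mul, laplacian_linearForm_pow_mul_normSq_pow, mul_add (C _), sum_add_distrib]
  rw [sum_range_succ, sum_range_succ' (n := k / 2), hlast]
  simp only [zero_mul, map_zero, mul_zero, add_zero, Nat.cast_zero]
  rw [← sum_add_distrib]
  refine sum_eq_zero fun j hj => ?_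
  have hjk : 2 * j + 2 ≤ k := by have := mem_range.mp hj; omega
  have hcancel : γ j * (y ⬝ᵥ y) ^ j * ((k - 2 * j : ℕ) * (k - 2 * j - 1 : ℕ) * (y ⬝ᵥ y)) +
      γ (j + 1) * (y ⬝ᵥ y) ^ (j + 1) * (2 * (j + 1 : ℕ) *
        (2 * (j + 1 : ℕ) + Fintype.card σ - 2 + 2 * (k - 2 * (j + 1) : ℕ))) = 0 := by
    rw [Nat.sub_sub, Nat.cast_sub (by omega), Nat.cast_sub (by omega), Nat.cast_sub (by omega)]
    push_cast
    linear_combination (y ⬝ᵥ y) ^ (j + 1) * hγ.recurrence j hjk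
  rw [Nat.sub_sub (m := 2 * j) (k := 2), ← mul_add_one, Nat.add_sub_cancel, ← mul_assoc (C _) (C _),
    ← mul_assoc (C _) (C _), ← add_mul, ← C_mul, ← C_mul, ← C_add, hcancel, C_0, zero_mul]

/-- Harmonicity kills every term of `zonalPoly γ k x` divisible by `normSq`. -/
lemma fischer_zonalPoly (hγ : IsZonalSeq (Fintype.card σ) k γ) (x y : σ → ℝ) :
    fischer (zonalPoly γ k x) (zonalPoly γ k y) =
      γ 0 * k ! * zonalForm γ k (x ⬝ᵥ y) ((x ⬝ᵥ x) * (y ⬝ᵥ y)) := by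
  have hlead : fischer (zonalPoly γ k x) (zonalPoly γ k y) =
      γ 0 * fischer (linearForm x ^ k) (zonalPoly γ k y) := by
    conv_lhs => rw [zonalPoly]
    rw [map_sum, LinearMap.sum_apply, sum_range_succ', sum_eq_zero, zero_add]
    · rw [fischer_C_mul]; simp
    · intro j _
      rw [fischer_C_mul, pow_succ' normSq, mul_left_comm, fischer_normSq_mul,
        laplacian_zonalPoly hγ, map_zero, mul_zero]
  rw [hlead, fischer_comm, zonalPoly, map_sum, LinearMap.sum_apply, zonalForm, mul_assoc, mul_sum,
    mul_sum, mul_sum]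
  refine sum_congr rfl fun j hj => ?_
  have hjk : k - 2 * j + 2 * j = k := by have := mem_range.mp hj; omega
  have hpair := fischer_linearForm_pow_mul_normSq_pow x y (k - 2 * j) j
  rw [hjk] at hpair
  rw [fischer_C_mul, hpair, mul_pow, dotProduct_comm y x]
  ring

lemma sum_sum_zonalForm_dotProduct_nonneg (hγ : IsZonalSeq (Fintype.card σ) k γ) {ι : Type*}
    (s : Finset ι) (c : ι → ℝ) (v : ι → σ → ℝ) :
    0 ≤ ∑ a ∈ s, ∑ b ∈ s,
      c a * c b * zonalForm γ k (v a ⬝ᵥ v b) ((v a ⬝ᵥ v a) * (v b ⬝ᵥ v b)) := by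
  have hself := fischer_self_nonneg (∑ a ∈ s, c a • zonalPoly γ k (v a))
  have hexpand : fischer (∑ a ∈ s, c a • zonalPoly γ k (v a)) (∑ a ∈ s, c a • zonalPoly γ k (v a)) =
      (γ 0 * k !) * ∑ a ∈ s, ∑ b ∈ s,
        c a * c b * zonalForm γ k (v a ⬝ᵥ v b) ((v a ⬝ᵥ v a) * (v b ⬝ᵥ v b)) := by
    simp only [map_sum, LinearMap.sum_apply, map_smul, LinearMap.smul_apply, smul_eq_mul, mul_sum,
      fischer_zonalPoly hγ]
    rw [sum_comm]
    exact sum_congr rfl fun a _ => sum_congr rfl fun b _ => by ring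
  rw [hexpand] at hself
  exact nonneg_of_mul_nonneg_right hself (mul_pos hγ.pos (by positivity))

end Fischer

theorem sum_sum_zonalForm_inner_nonneg {E : Type*} [NormedAddCommGroup E] [InnerProductSpace ℝ E]
    [FiniteDimensional ℝ E] {γ : ℕ → ℝ} {k : ℕ} (hγ : IsZonalSeq (Module.finrank ℝ E) k γ)
    {ι : Type*} (s : Finset ι) (c : ι → ℝ) (v : ι → E) :
    0 ≤ ∑ a ∈ s, ∑ b ∈ s, c a * c b * zonalForm γ k ⟪v a, v b⟫ (‖v a‖ ^ 2 * ‖v b‖ ^ 2) := by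
  have hinner (x y : E) : ⟪x, y⟫ =
      ((stdOrthonormalBasis ℝ E).repr x).ofLp ⬝ᵥ ((stdOrthonormalBasis ℝ E).repr y).ofLp := by
    rw [← (stdOrthonormalBasis ℝ E).repr.inner_map_map, EuclideanSpace.inner_eq_star_dotProduct,
      star_trivial, dotProduct_comm]
  simp only [← real_inner_self_eq_norm_sq, hinner]
  exact sum_sum_zonalForm_dotProduct_nonneg (by rwa [Fintype.card_fin]) s c _

/-! ### The three-point bound -/

section ThreePoint

lemma sum_sum_le_of_forall_distinct {α : Type*} [DecidableEq α] {S : Finset α} {x : α} (hx : x ∈ S)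
    {G : α → α → ℝ} {β : ℝ} (hG : ∀ y ∈ S.erase x, ∀ z ∈ S.erase x, y ≠ z → G y z ≤ -β) :
    ∑ y ∈ S, ∑ z ∈ S, G y z ≤
      G x x + ∑ y ∈ S.erase x, (G x y + G y x + G y y) - β * ((#S - 1) * (#S - 2)) := by
  have hcard : (#(S.erase x) : ℝ) = #S - 1 := by
    rw [card_erase_of_mem hx, Nat.cast_sub (card_pos.mpr ⟨x, hx⟩), Nat.cast_one]
  have hrow : ∀ y ∈ S.erase x, ∑ z ∈ S.erase x, G y z ≤ G y y - β * (#S - 2) := by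
    intro y hy
    have hcard' : (#((S.erase x).erase y) : ℝ) = #S - 2 := by
      rw [card_erase_of_mem hy, Nat.cast_sub (card_pos.mpr ⟨y, hy⟩), hcard, Nat.cast_one]
      ring
    have hle := sum_le_card_nsmul ((S.erase x).erase y) (G y) (-β) fun z hz =>
      hG y hy z (mem_of_mem_erase hz) (ne_of_mem_erase hz).symm
    rw [nsmul_eq_mul, hcard'] at hle
    rw [← add_sum_erase _ _ hy]
    linarith
  have hrows := sum_le_sum hrow
  rw [sum_sub_distrib, sum_const, nsmul_eq_mul, hcard] at hrows
  simp only [← add_sum_erase S _ hx, sum_add_distrib]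
  linarith

/-- Bachoc and Vallentin's inequality: add up `F x y z + F y z x + F z x y` over all triples and
`3 * P x y` over all pairs, and separate the terms by coincidences among `x`, `y`, `z`. -/
theorem three_point_inequality {α : Type*} {S : Finset α} (hS : S.Nonempty)
    {F : α → α → α → ℝ} {P : α → α → ℝ} {β γ δ : ℝ}
    (hF : ∀ z ∈ S, 0 ≤ ∑ x ∈ S, ∑ y ∈ S, F x y z) (hP : 0 ≤ ∑ x ∈ S, ∑ y ∈ S, P x y)
    (hcomm : ∀ x y, P x y = P y x) (hdiag : ∀ x ∈ S, F x x x + P x x ≤ δ)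
    (hpair : ∀ x ∈ S, ∀ y ∈ S, x ≠ y → F x x y + F x y x + F y x x + P x y ≤ γ)
    (htriple : ∀ x ∈ S, ∀ y ∈ S, ∀ z ∈ S, x ≠ y → y ≠ z → x ≠ z →
      F x y z + F y z x + F z x y ≤ -β) :
    β * ((#S - 1) * (#S - 2)) ≤ 3 * (δ + (#S - 1) * γ) := by
  classical
  have hrow : ∀ x ∈ S, ∑ y ∈ S, ∑ z ∈ S, (F x y z + F y z x + F z x y) + 3 * ∑ y ∈ S, P x y ≤
      3 * (δ + (#S - 1) * γ) - β * ((#S - 1) * (#S - 2)) := by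
    intro x hx
    have hle := sum_sum_le_of_forall_distinct hx (G := fun y z => F x y z + F y z x + F z x y)
      fun y hy z hz hyz => htriple x hx y (mem_of_mem_erase hy) z (mem_of_mem_erase hz)
        (ne_of_mem_erase hy).symm hyz (ne_of_mem_erase hz).symm
    have hpairs := sum_le_card_nsmul (S.erase x) (fun y => F x x y + F x y x + F y x x +
        (F x y x + F y x x + F x x y) + (F x y y + F y y x + F y x y) + 3 * P x y)
      (3 * γ) fun y hy => by
        have hxy := hpair x hx y (mem_of_mem_erase hy) (ne_of_mem_erase hy).symm
        have hyx := hpair y (mem_of_mem_erase hy) x hx (ne_of_mem_erase hy)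
        have := hcomm x y
        linarith
    rw [nsmul_eq_mul, card_erase_of_mem hx, Nat.cast_sub (card_pos.mpr hS), Nat.cast_one,
      sum_add_distrib, ← mul_sum] at hpairs
    rw [← add_sum_erase S (P x) hx]
    have := hdiag x hx
    linarith
  have hcyclic (H : α → α → α → ℝ) :
      ∑ x ∈ S, ∑ y ∈ S, ∑ z ∈ S, H y z x = ∑ x ∈ S, ∑ y ∈ S, ∑ z ∈ S, H x y z := by
    rw [sum_comm]
    exact sum_congr rfl fun y _ => sum_comm
  have hFsum : 0 ≤ ∑ x ∈ S, ∑ y ∈ S, ∑ z ∈ S, F x y z := by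
    rw [← hcyclic]
    exact sum_nonneg hF
  have htotal := sum_le_card_nsmul S _ _ hrow
  simp only [sum_add_distrib, ← mul_sum] at htotal
  rw [hcyclic F, ← hcyclic fun x y z => F z x y, nsmul_eq_mul] at htotal
  refine le_of_sub_nonneg (nonneg_of_mul_nonneg_right ?_ (Nat.cast_pos.mpr (card_pos.mpr hS)))
  linarith

variable {E : Type*} [NormedAddCommGroup E] [InnerProductSpace ℝ E]

lemma inner_mem_Icc_of_one_le_dist {x y : E} (hx : ‖x‖ = 1) (hy : ‖y‖ = 1) (h : 1 ≤ dist x y) :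
    ⟪x, y⟫ ∈ Set.Icc (-1) (1 / 2) := by
  constructor
  · simpa [hx, hy] using (abs_le.mp (abs_real_inner_le_norm x y)).1
  · have hsq := norm_sub_sq_real x y
    rw [dist_eq_norm] at h
    rw [hx, hy] at hsq
    nlinarith

lemma inner_sub_smul_sub_smul {z : E} (hz : ‖z‖ = 1) (x y : E) :
    ⟪x - ⟪x, z⟫ • z, y - ⟪y, z⟫ • z⟫ = ⟪x, y⟫ - ⟪x, z⟫ * ⟪y, z⟫ := by
  simp only [inner_sub_left, inner_sub_right, real_inner_smul_left, real_inner_smul_right,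
    real_inner_self_eq_norm_sq, hz, real_inner_comm y z]
  ring

lemma norm_sub_smul_sq {x z : E} (hx : ‖x‖ = 1) (hz : ‖z‖ = 1) :
    ‖x - ⟪x, z⟫ • z‖ ^ 2 = 1 - ⟪x, z⟫ ^ 2 := by
  rw [← real_inner_self_eq_norm_sq, inner_sub_smul_sub_smul hz, real_inner_self_eq_norm_sq, hx]
  ring

/-- Cauchy–Schwarz for the projections of `x` and `y` orthogonally to `z`. -/
lemma gram_det_nonneg {x y z : E} (hx : ‖x‖ = 1) (hy : ‖y‖ = 1) (hz : ‖z‖ = 1) :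
    0 ≤ 1 + 2 * ⟪x, z⟫ * ⟪y, z⟫ * ⟪x, y⟫ - ⟪x, z⟫ ^ 2 - ⟪y, z⟫ ^ 2 - ⟪x, y⟫ ^ 2 := by
  have h := real_inner_mul_inner_self_le (x - ⟪x, z⟫ • z) (y - ⟪y, z⟫ • z)
  rw [real_inner_self_eq_norm_sq, real_inner_self_eq_norm_sq, norm_sub_smul_sq hx hz,
    norm_sub_smul_sq hy hz, inner_sub_smul_sub_smul hz] at h
  linarith

theorem sum_sum_zonalForm_proj_nonneg {m : ℕ} (hm : Module.finrank ℝ E = m + 1) {γ : ℕ → ℝ}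
    {k : ℕ} (hγ : IsZonalSeq m k γ) {S : Finset E} (hS : ∀ x ∈ S, ‖x‖ = 1) {z : E} (hz : ‖z‖ = 1)
    (c : E → ℝ) :
    0 ≤ ∑ x ∈ S, ∑ y ∈ S, c x * c y *
      zonalForm γ k (⟪x, y⟫ - ⟪x, z⟫ * ⟪y, z⟫) ((1 - ⟪x, z⟫ ^ 2) * (1 - ⟪y, z⟫ ^ 2)) := by
  have : FiniteDimensional ℝ E := Module.finite_of_finrank_eq_succ hm
  have : Fact (Module.finrank ℝ E = m + 1) := ⟨hm⟩
  have hdim := Submodule.finrank_orthogonal_span_singleton (𝕜 := ℝ) (n := m)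
    (norm_ne_zero_iff.mp (hz.trans_ne one_ne_zero))
  have hmem (x : E) : x - ⟪x, z⟫ • z ∈ (Submodule.span ℝ {z})ᗮ := by
    rw [Submodule.mem_orthogonal_singleton_iff_inner_left, inner_sub_left, real_inner_smul_left,
      real_inner_self_eq_norm_sq, hz]
    ring
  refine (sum_sum_zonalForm_inner_nonneg (hdim ▸ hγ) S c
    (fun x => (⟨x - ⟪x, z⟫ • z, hmem x⟩ : (Submodule.span ℝ {z})ᗮ))).trans_eq ?_
  refine sum_congr rfl fun x hx => sum_congr rfl fun y hy => ?_
  rw [Submodule.coe_inner, Submodule.coe_norm, Submodule.coe_norm, inner_sub_smul_sub_smul hz,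
    norm_sub_smul_sq (hS x hx) hz, norm_sub_smul_sq (hS y hy) hz]

end ThreePoint

/-! ### Bernstein forms and their subdivision -/

section Bernstein

/-- The `i`-th Bernstein basis polynomial of degree `n`, as a function. -/
def bernsteinBasis (n i : ℕ) (x : ℝ) : ℝ := n.choose i * x ^ i * (1 - x) ^ (n - i)

/-- The polynomial of degree at most `n` with Bernstein coefficients `c 0, …, c n`. -/
def bernsteinForm (n : ℕ) (c : ℕ → ℝ) (x : ℝ) : ℝ :=
  ∑ i ∈ range (n + 1), c i * bernsteinBasis n i x

lemma bernsteinBasis_nonneg {x : ℝ} (hx : x ∈ Set.Icc 0 1) (n i : ℕ) :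
    0 ≤ bernsteinBasis n i x :=
  mul_nonneg (mul_nonneg (Nat.cast_nonneg _) (pow_nonneg hx.1 _))
    (pow_nonneg (sub_nonneg.mpr hx.2) _)

lemma sum_bernsteinBasis (n : ℕ) (x : ℝ) : ∑ i ∈ range (n + 1), bernsteinBasis n i x = 1 := by
  simpa [Polynomial.eval_finsetSum, bernsteinPolynomial, bernsteinBasis] using
    congrArg (Polynomial.eval x) (bernsteinPolynomial.sum ℝ n)

lemma bernsteinBasis_succ_succ {n i : ℕ} (hi : i < n) (x : ℝ) :
    bernsteinBasis (n + 1) (i + 1) x =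
      (1 - x) * bernsteinBasis n (i + 1) x + x * bernsteinBasis n i x := by
  obtain ⟨m, rfl⟩ := Nat.exists_eq_add_of_lt hi
  simp only [bernsteinBasis, Nat.choose_succ_succ', Nat.cast_add,
    show i + m + 1 + 1 - (i + 1) = m + 1 by omega, show i + m + 1 - (i + 1) = m by omega,
    show i + m + 1 - i = m + 1 by omega]
  ring

lemma bernsteinForm_succ (n : ℕ) (c : ℕ → ℝ) (x : ℝ) :
    bernsteinForm (n + 1) c x =
      (1 - x) * bernsteinForm n c x + x * bernsteinForm n (fun i => c (i + 1)) x := by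
  have hinner : ∑ i ∈ range n, c (i + 1) * bernsteinBasis (n + 1) (i + 1) x =
      ∑ i ∈ range n, ((1 - x) * (c (i + 1) * bernsteinBasis n (i + 1) x) +
        x * (c (i + 1) * bernsteinBasis n i x)) :=
    sum_congr rfl fun i hi => by rw [bernsteinBasis_succ_succ (mem_range.mp hi)]; ring
  have hfirst : bernsteinBasis (n + 1) 0 x = (1 - x) * bernsteinBasis n 0 x := by
    simp only [bernsteinBasis, Nat.choose_zero_right, Nat.sub_zero]; ring
  have hlast : bernsteinBasis (n + 1) (n + 1) x = x * bernsteinBasis n n x := by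
    simp only [bernsteinBasis, Nat.choose_self, Nat.sub_self]; ring
  rw [bernsteinForm, sum_range_succ, sum_range_succ', hinner, sum_add_distrib, ← mul_sum, ← mul_sum,
    bernsteinForm, bernsteinForm, sum_range_succ', sum_range_succ, hfirst, hlast]
  ring

/-- De Casteljau's triangle of iterated averages of neighbouring coefficients. -/
noncomputable def deCasteljau (c : ℕ → ℝ) : ℕ → ℕ → ℝ
  | 0, i => c i
  | r + 1, i => (deCasteljau c r i + deCasteljau c r (i + 1)) / 2

lemma deCasteljau_average (c : ℕ → ℝ) (r i : ℕ) :
    deCasteljau (fun j => (c j + c (j + 1)) / 2) r i = deCasteljau c (r + 1) i := by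
  induction r generalizing i with
  | zero => rfl
  | succ r ih => rw [deCasteljau, ih, ih, ← deCasteljau]

lemma deCasteljau_shift (c : ℕ → ℝ) (r i : ℕ) :
    deCasteljau (fun j => c (j + 1)) r i = deCasteljau c r (i + 1) := by
  induction r generalizing i with
  | zero => rfl
  | succ r ih => rw [deCasteljau, ih, ih, deCasteljau]

lemma bernsteinForm_average (n : ℕ) (c : ℕ → ℝ) (x : ℝ) :
    bernsteinForm n (fun j => (c j + c (j + 1)) / 2) x =
      (bernsteinForm n c x + bernsteinForm n (fun j => c (j + 1)) x) / 2 := by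
  rw [bernsteinForm, bernsteinForm, bernsteinForm, ← sum_add_distrib, sum_div]
  exact sum_congr rfl fun j _ => by ring

/-- The affine map of the unit interval onto its lower or upper half. -/
noncomputable def halfMap (upper : Bool) (x : ℝ) : ℝ := bif upper then (1 + x) / 2 else x / 2

/-- The Bernstein coefficients on the lower or upper half of the unit interval. -/
noncomputable def halfCoeff (n : ℕ) (upper : Bool) (c : ℕ → ℝ) (i : ℕ) : ℝ :=
  bif upper then deCasteljau c (n - i) i else deCasteljau c i 0

lemma bernsteinForm_halfMap (n : ℕ) (upper : Bool) (c : ℕ → ℝ) (x : ℝ) :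
    bernsteinForm n c (halfMap upper x) = bernsteinForm n (halfCoeff n upper c) x := by
  induction n generalizing c with
  | zero => cases upper <;> simp [bernsteinForm, bernsteinBasis, halfCoeff, deCasteljau]
  | succ n ih =>
    have haverage := bernsteinForm_average n c (halfMap upper x)
    rw [ih] at haverage
    cases upper
    · have hstep : halfCoeff n false (fun j => (c j + c (j + 1)) / 2) =
          fun i => halfCoeff (n + 1) false c (i + 1) :=
        funext fun i => deCasteljau_average c i 0
      rw [bernsteinForm_succ (x := x), ← hstep, haverage,
        show halfCoeff (n + 1) false c = halfCoeff n false c from rfl, ← ih, bernsteinForm_succ]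
      simp only [halfMap, cond_false]
      ring
    · have hlower : bernsteinForm n (halfCoeff n true fun j => (c j + c (j + 1)) / 2) x =
          bernsteinForm n (halfCoeff (n + 1) true c) x := by
        refine sum_congr rfl fun i hi => ?_
        rw [halfCoeff, halfCoeff, cond_true, cond_true, deCasteljau_average,
          Nat.succ_sub (mem_range_succ_iff.mp hi)]
      have hupper : halfCoeff n true (fun j => c (j + 1)) =
          fun i => halfCoeff (n + 1) true c (i + 1) := by
        funext i
        rw [halfCoeff, halfCoeff, cond_true, cond_true, deCasteljau_shift, Nat.add_sub_add_right]
      rw [bernsteinForm_succ (x := x), ← hlower, ← hupper, haverage, ← ih, bernsteinForm_succ]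
      simp only [halfMap, cond_true]
      ring

end Bernstein

section TensorBernstein

variable {ι : Type*} [Fintype ι] [DecidableEq ι] {N : ℕ}

/-- The polynomial function of degree at most `N` in each coordinate with tensor-product Bernstein
coefficients `c I`, where `I b ≤ N` for all `b`. -/
def tensorForm (N : ℕ) (c : (ι → ℕ) → ℝ) (x : ι → ℝ) : ℝ :=
  ∑ I ∈ Fintype.piFinset fun _ => range (N + 1), c I * ∏ b, bernsteinBasis N (I b) (x b)

lemma tensorForm_mono {c c' : (ι → ℕ) → ℝ} (h : ∀ I, (∀ b, I b ≤ N) → c I ≤ c' I) {x : ι → ℝ}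
    (hx : ∀ b, x b ∈ Set.Icc 0 1) : tensorForm N c x ≤ tensorForm N c' x := by
  refine sum_le_sum fun I hI => mul_le_mul_of_nonneg_right (h I fun b => ?_)
    (prod_nonneg fun b _ => bernsteinBasis_nonneg (hx b) _ _)
  exact mem_range_succ_iff.mp (Fintype.mem_piFinset.mp hI b)

lemma tensorForm_const (N : ℕ) (a : ℝ) (x : ι → ℝ) : tensorForm N (fun _ => a) x = a := by
  rw [tensorForm, ← mul_sum, ← prod_univ_sum _ fun b j => bernsteinBasis N j (x b)]
  simp only [sum_bernsteinBasis, prod_const_one, mul_one]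

lemma tensorForm_eq_sum_fibre (a : ι) (c : (ι → ℕ) → ℝ) (x : ι → ℝ) :
    tensorForm N c x =
      ∑ I ∈ Fintype.piFinset (fun _ => range (N + 1)) with I a = 0,
        bernsteinForm N (fun j => c (Function.update I a j)) (x a) *
          ∏ b ∈ univ.erase a, bernsteinBasis N (I b) (x b) := by
  simp only [bernsteinForm, sum_mul]
  rw [tensorForm, ← sum_product']
  refine sum_nbij' (fun I => (Function.update I a 0, I a))
    (fun q => Function.update q.1 a q.2) ?_ ?_ ?_ ?_ ?_
  · intro I hI
    rw [Fintype.mem_piFinset] at hI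
    simp only [mem_product, mem_filter, Fintype.mem_piFinset, Function.update_self, and_true]
    refine ⟨fun b => ?_, hI a⟩
    rcases eq_or_ne b a with rfl | hb
    · simp
    · simpa only [Function.update_of_ne hb] using hI b
  · rintro ⟨I, j⟩ hq
    simp only [mem_product, mem_filter, Fintype.mem_piFinset] at hq ⊢
    intro b
    rcases eq_or_ne b a with rfl | hb
    · simpa only [Function.update_self] using hq.2
    · simpa only [Function.update_of_ne hb] using hq.1.1 b
  · intro I _
    simp
  · rintro ⟨I, j⟩ hq
    have hzero : I a = 0 := (mem_filter.mp (mem_product.mp hq).1).2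
    rw [Function.update_self, Function.update_idem, ← hzero, Function.update_eq_self]
  · intro I _
    rw [Function.update_idem, Function.update_eq_self, ← mul_prod_erase univ _ (mem_univ a),
      mul_assoc]
    congr 2
    exact prod_congr rfl fun b hb => by
      simp only [Function.update_of_ne (ne_of_mem_erase hb)]

/-- Subdividing along the axis `a` with coefficients that are rounded down. -/
lemma tensorForm_le_of_le_halfCoeff {c c' : (ι → ℕ) → ℝ} (a : ι) (upper : Bool)
    (h : ∀ I, (∀ b, I b ≤ N) → c' I ≤ halfCoeff N upper (fun j => c (Function.update I a j)) (I a))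
    {x : ι → ℝ} (hx : ∀ b, x b ∈ Set.Icc 0 1) :
    tensorForm N c' x ≤ tensorForm N c (Function.update x a (halfMap upper (x a))) := by
  refine (tensorForm_mono h hx).trans_eq ?_
  rw [tensorForm_eq_sum_fibre a, tensorForm_eq_sum_fibre a]
  refine sum_congr rfl fun I _ => ?_
  simp only [Function.update_self, Function.update_idem, bernsteinForm_halfMap]
  congr 1
  exact prod_congr rfl fun b hb => by rw [Function.update_of_ne (ne_of_mem_erase hb)]

end TensorBernstein

/-! ### Arrays packed into a single natural number -/

section Lanes

/-- The `i`-th digit of `p` in base `2 ^ w`: the `i`-th entry of the array packed in `p`. Masking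
before shifting keeps an evaluation cheap even where a shift is carried out as a division. -/
def lane (w p i : ℕ) : ℕ := (p &&& ((2 ^ w - 1) <<< (w * i))) >>> (w * i)

variable {w p q : ℕ}

lemma lane_eq_div_mod (w p i : ℕ) : lane w p i = p / 2 ^ (w * i) % 2 ^ w := by
  rw [lane, Nat.shiftRight_and_distrib, Nat.shiftLeft_shiftRight, Nat.and_two_pow_sub_one_eq_mod,
    Nat.shiftRight_eq_div_pow]

lemma testBit_lane (w p i j : ℕ) :
    (lane w p i).testBit j = (decide (j < w) && p.testBit (w * i + j)) := by
  rw [lane_eq_div_mod, Nat.testBit_mod_two_pow, Nat.testBit_div_two_pow, add_comm j]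

lemma lane_and (w p q i : ℕ) : lane w (p &&& q) i = lane w p i &&& lane w q i := by
  refine Nat.eq_of_testBit_eq fun j => ?_
  simp only [testBit_lane, Nat.testBit_and]
  cases decide (j < w) <;> simp

lemma lane_or (w p q i : ℕ) : lane w (p ||| q) i = lane w p i ||| lane w q i := by
  refine Nat.eq_of_testBit_eq fun j => ?_
  simp only [testBit_lane, Nat.testBit_or, Bool.and_or_distrib_left]

lemma lane_shiftRight (w p s i : ℕ) : lane w (p >>> (w * s)) i = lane w p (i + s) := by
  rw [lane_eq_div_mod, ← Nat.shiftRight_eq_div_pow, ← Nat.shiftRight_add, ← mul_add, add_comm s,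
    Nat.shiftRight_eq_div_pow, lane_eq_div_mod]

lemma lane_shiftLeft (w p s i : ℕ) :
    lane w (p <<< (w * s)) i = if s ≤ i then lane w p (i - s) else 0 := by
  rw [lane_eq_div_mod, Nat.shiftLeft_eq]
  split_ifs with h
  · obtain ⟨j, rfl⟩ := Nat.exists_eq_add_of_le h
    rw [mul_add, pow_add, ← Nat.div_div_eq_div_mul, Nat.mul_div_cancel _ (by positivity),
      Nat.add_sub_cancel_left, lane_eq_div_mod]
  · obtain ⟨j, rfl⟩ := Nat.exists_eq_add_of_le (not_le.mp h)
    rw [show w * (i + 1 + j) = w * j + w + w * i by ring, pow_add, ← mul_assoc,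
      Nat.mul_div_cancel _ (by positivity), pow_add, ← mul_assoc, Nat.mul_mod_left]

lemma lane_add_mul_zero {a : ℕ} (ha : a < 2 ^ w) (b : ℕ) : lane w (a + 2 ^ w * b) 0 = a := by
  simp [lane_eq_div_mod, Nat.mod_eq_of_lt ha]

lemma lane_add_mul_succ {a : ℕ} (ha : a < 2 ^ w) (b i : ℕ) :
    lane w (a + 2 ^ w * b) (i + 1) = lane w b i := by
  rw [lane_eq_div_mod, mul_add_one, add_comm (w * i), pow_add, ← Nat.div_div_eq_div_mul,
    Nat.add_mul_div_left _ _ (by positivity), Nat.div_eq_of_lt ha, zero_add, lane_eq_div_mod]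

lemma lane_sum {f : ℕ → ℕ} {n : ℕ} (hf : ∀ i < n, f i < 2 ^ w) (j : ℕ) :
    lane w (∑ i ∈ range n, f i * 2 ^ (w * i)) j = if j < n then f j else 0 := by
  induction n generalizing f j with
  | zero => simp [lane]
  | succ n ih =>
    have hshift : ∑ i ∈ range (n + 1), f i * 2 ^ (w * i) =
        f 0 + 2 ^ w * ∑ i ∈ range n, f (i + 1) * 2 ^ (w * i) := by
      rw [sum_range_succ', mul_zero, pow_zero, mul_one, add_comm, mul_sum]
      exact congrArg _ (sum_congr rfl fun i _ => by rw [mul_add_one, pow_add]; ring)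
    rw [hshift]
    rcases j with _ | j
    · rw [lane_add_mul_zero (hf 0 n.succ_pos), if_pos n.succ_pos]
    · rw [lane_add_mul_succ (hf 0 n.succ_pos), ih fun i hi => hf _ (Nat.succ_lt_succ hi)]
      simp only [Nat.add_lt_add_iff_right]

lemma eq_sum_lane_add (w p n : ℕ) :
    p = ∑ i ∈ range n, lane w p i * 2 ^ (w * i) + 2 ^ (w * n) * (p / 2 ^ (w * n)) := by
  induction n with
  | zero => simp
  | succ n ih =>
    have hdiv : p / 2 ^ (w * n) = lane w p n + 2 ^ w * (p / 2 ^ (w * (n + 1))) := by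
      rw [lane_eq_div_mod, mul_add_one, pow_add, ← Nat.div_div_eq_div_mul, Nat.mod_add_div]
    rw [sum_range_succ]
    nth_rewrite 1 [ih]
    rw [hdiv, mul_add_one, pow_add]
    ring

lemma lane_add (h : ∀ i, lane w p i + lane w q i < 2 ^ w) (i : ℕ) :
    lane w (p + q) i = lane w p i + lane w q i := by
  have hsplit : p + q = ∑ j ∈ range (i + 1), (lane w p j + lane w q j) * 2 ^ (w * j) +
      2 ^ (w * (i + 1)) * (p / 2 ^ (w * (i + 1)) + q / 2 ^ (w * (i + 1))) := by
    simp only [add_mul, sum_add_distrib]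
    nth_rewrite 1 [eq_sum_lane_add w p (i + 1), eq_sum_lane_add w q (i + 1)]
    ring
  have hlow := lane_sum (fun j (_ : j < i + 1) => h j) i
  rw [if_pos i.lt_succ_self] at hlow
  rw [← hlow, hsplit, lane_eq_div_mod, lane_eq_div_mod, mul_add_one, pow_add, mul_assoc,
    Nat.add_mul_div_left _ _ (by positivity), Nat.add_mul_mod_self_left]

/-- `f lo, …, f (lo + 2 ^ k - 1)` packed as `2 ^ k` lanes, by bisection. -/
def pack (w : ℕ) (f : ℕ → ℕ) : ℕ → ℕ → ℕ
  | 0, lo => f lo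
  | k + 1, lo => pack w f k lo + pack w f k (lo + 2 ^ k) <<< (w * 2 ^ k)

lemma pack_eq_sum (w : ℕ) (f : ℕ → ℕ) (k lo : ℕ) :
    pack w f k lo = ∑ i ∈ range (2 ^ k), f (lo + i) * 2 ^ (w * i) := by
  induction k generalizing lo with
  | zero => simp [pack]
  | succ k ih =>
    rw [pack, ih, ih, pow_succ, mul_two, sum_range_add, Nat.shiftLeft_eq, sum_mul]
    refine congrArg _ (sum_congr rfl fun i _ => ?_)
    rw [mul_add, pow_add, add_assoc]
    ring

/-- `f 0, …, f (n - 1)` packed as lanes, followed by zeros. -/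
def packBelow (w n : ℕ) (f : ℕ → ℕ) : ℕ :=
  pack w (fun i => if i < n then f i else 0) (n.log2 + 1) 0

lemma packBelow_eq_sum (w n : ℕ) (f : ℕ → ℕ) :
    packBelow w n f = ∑ i ∈ range n, f i * 2 ^ (w * i) := by
  rw [packBelow, pack_eq_sum]
  refine (sum_subset (range_subset_range.mpr Nat.lt_log2_self.le) ?_).symm.trans
    (sum_congr rfl fun i hi => ?_)
  · intro i _ hi
    rw [zero_add, if_neg (by simpa using hi), zero_mul]
  · rw [zero_add, if_pos (mem_range.mp hi)]

lemma lane_packBelow {n : ℕ} {f : ℕ → ℕ} (hf : ∀ i < n, f i < 2 ^ w) (i : ℕ) :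
    lane w (packBelow w n f) i = if i < n then f i else 0 := by
  rw [packBelow_eq_sum, lane_sum hf]

end Lanes

/-! ### Subdivision of packed Bernstein coefficients -/

section Averaging

variable {B M p s : ℕ}

/-- All lanes of width `B + 1` have top bit `0`, so that two such arrays add without carries between
lanes. -/
def IsNarrow (B p : ℕ) : Prop := ∀ i, lane (B + 1) p i < 2 ^ B

lemma IsNarrow.and_right {q : ℕ} (hq : IsNarrow B q) (p : ℕ) : IsNarrow B (p &&& q) := fun i => by
  rw [lane_and]
  exact Nat.and_lt_two_pow _ (hq i)

lemma IsNarrow.shiftLeft (hp : IsNarrow B p) (s : ℕ) : IsNarrow B (p <<< ((B + 1) * s)) := by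
  intro i
  rw [lane_shiftLeft]
  split_ifs
  exacts [hp _, by positivity]

lemma isNarrow_packBelow {n : ℕ} {f : ℕ → ℕ} (hf : ∀ i < n, f i < 2 ^ B) :
    IsNarrow B (packBelow (B + 1) n f) := fun i => by
  rw [lane_packBelow fun i hi => (hf i hi).trans (Nat.pow_lt_pow_succ one_lt_two)]
  split_ifs with hi
  exacts [hf i hi, by positivity]

/-- Replaces lane `i` by the average of lanes `i` and `i + s`, rounded down and masked by `M`. -/
def average (B s M p : ℕ) : ℕ := ((p + p >>> ((B + 1) * s)) >>> 1) &&& M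

lemma lane_average (hM : IsNarrow B M) (hp : IsNarrow B p) (s i : ℕ) :
    lane (B + 1) (average B s M p) i =
      (lane (B + 1) p i + lane (B + 1) p (i + s)) / 2 &&& lane (B + 1) M i := by
  have hadd : lane (B + 1) (p + p >>> ((B + 1) * s)) i =
      lane (B + 1) p i + lane (B + 1) p (i + s) := by
    rw [lane_add fun j => ?_, lane_shiftRight]
    rw [lane_shiftRight, pow_succ, mul_two]
    exact add_lt_add (hp j) (hp _)
  refine Nat.eq_of_testBit_eq fun j => ?_
  rw [average, lane_and, ← hadd, Nat.testBit_and, Nat.testBit_and]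
  rcases lt_or_ge j B with hj | hj
  · simp only [Nat.testBit_div_two, testBit_lane, Nat.testBit_shiftRight]
    rw [show 1 + ((B + 1) * i + j) = (B + 1) * i + (j + 1) by ring]
    simp [hj, hj.trans B.lt_succ_self]
  · rw [Nat.testBit_lt_two_pow ((hM i).trans_le (Nat.pow_le_pow_right two_pos hj)), Bool.and_false,
      Bool.and_false]

/-- The `r`-th row of de Casteljau's triangle, computed in all lanes at once. -/
def averageIter (B s M p : ℕ) : ℕ → ℕ
  | 0 => p
  | r + 1 => average B s M (averageIter B s M p r)

lemma IsNarrow.averageIter (hM : IsNarrow B M) (hp : IsNarrow B p) (s r : ℕ) :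
    IsNarrow B (averageIter B s M p r) := by
  cases r with
  | zero => exact hp
  | succ r => exact hM.and_right _

lemma lane_averageIter_le (hM : IsNarrow B M) (hp : IsNarrow B p) (s l r i : ℕ) :
    (lane (B + 1) (averageIter B s M p r) (l + s * i) : ℝ) ≤
      deCasteljau (fun j => (lane (B + 1) p (l + s * j) : ℝ)) r i := by
  induction r generalizing i with
  | zero => exact le_rfl
  | succ r ih =>
    rw [averageIter, lane_average hM (hM.averageIter hp s r), deCasteljau, add_assoc,
      ← mul_add_one]
    calc _ ≤ (((lane (B + 1) (averageIter B s M p r) (l + s * i) +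
              lane (B + 1) (averageIter B s M p r) (l + s * (i + 1))) / 2 : ℕ) : ℝ) :=
          Nat.cast_le.mpr Nat.and_le_left
      _ ≤ _ := Nat.cast_div_le
      _ ≤ _ := by
        push_cast
        linarith [ih i, ih (i + 1)]

end Averaging

section Halving

variable {B N d : ℕ}

/-- The bitwise disjunction of `f 0, …, f (n - 1)`. -/
def orRange (f : ℕ → ℕ) : ℕ → ℕ
  | 0 => 0
  | n + 1 => orRange f n ||| f n

lemma lane_orRange_le {w n i k : ℕ} {f : ℕ → ℕ} (h : ∀ r < n, r ≠ k → lane w (f r) i = 0) :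
    lane w (orRange f n) i ≤ lane w (f k) i := by
  suffices hor : lane w (orRange f n) i = 0 ∨ lane w (orRange f n) i = lane w (f k) i by omega
  induction n with
  | zero => simp [orRange, lane]
  | succ n ih =>
    rw [orRange, lane_or]
    have hprev := ih fun r hr => h r (hr.trans n.lt_succ_self)
    rcases eq_or_ne n k with rfl | hn
    · rcases hprev with hprev | hprev <;> simp [hprev]
    · rwa [h n n.lt_succ_self hn, Nat.or_zero]

lemma isNarrow_orRange {f : ℕ → ℕ} (hf : ∀ r, IsNarrow B (f r)) (n : ℕ) :
    IsNarrow B (orRange f n) := by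
  induction n with
  | zero => exact fun i => by simp [orRange, lane]
  | succ n ih => exact fun i => by rw [orRange, lane_or]; exact Nat.or_lt_two_pow (ih i) (hf n i)

/-- The lane that stores the coefficient with multi-index `I` (where `I b ≤ N`). -/
def gridIndex (N : ℕ) (I : Fin d → ℕ) : ℕ := ∑ b, I b * (N + 1) ^ (b : ℕ)

lemma gridIndex_update (I : Fin d → ℕ) (a : Fin d) (j : ℕ) :
    gridIndex N (Function.update I a j) =
      gridIndex N (Function.update I a 0) + (N + 1) ^ (a : ℕ) * j := by
  have hrest : ∀ j, gridIndex N (Function.update I a j) =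
      j * (N + 1) ^ (a : ℕ) + ∑ b ∈ univ.erase a, I b * (N + 1) ^ (b : ℕ) := fun j => by
    rw [gridIndex, ← add_sum_erase univ _ (mem_univ a), Function.update_self]
    exact congrArg _ (sum_congr rfl fun b hb => by
      rw [Function.update_of_ne (ne_of_mem_erase hb)])
  rw [hrest, hrest 0]
  ring

lemma gridIndex_eq_finFunctionFinEquiv {I : Fin d → ℕ} (hI : ∀ b, I b ≤ N) :
    gridIndex N I =
      finFunctionFinEquiv (fun b => (⟨I b, Nat.lt_succ_of_le (hI b)⟩ : Fin (N + 1))) := by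
  rw [finFunctionFinEquiv_apply, gridIndex]

lemma gridIndex_lt {I : Fin d → ℕ} (hI : ∀ b, I b ≤ N) : gridIndex N I < (N + 1) ^ d := by
  rw [gridIndex_eq_finFunctionFinEquiv hI]
  exact Fin.is_lt _

lemma gridIndex_div_mod {I : Fin d → ℕ} (hI : ∀ b, I b ≤ N) (a : Fin d) :
    gridIndex N I / (N + 1) ^ (a : ℕ) % (N + 1) = I a := by
  have hdigit := congrArg Fin.val (congrFun (finFunctionFinEquiv.symm_apply_apply
    fun b => (⟨I b, Nat.lt_succ_of_le (hI b)⟩ : Fin (N + 1))) a)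
  rwa [finFunctionFinEquiv_symm_apply_val, ← gridIndex_eq_finFunctionFinEquiv hI] at hdigit

/-- The mask of all lanes of a grid. -/
def gridMask (B N d : ℕ) : ℕ := packBelow (B + 1) ((N + 1) ^ d) fun _ => 2 ^ B - 1

/-- The mask of the grid lanes whose multi-index vanishes on the axis of stride `s`. -/
def faceMask (B N d s : ℕ) : ℕ :=
  packBelow (B + 1) ((N + 1) ^ d) fun l => if l / s % (N + 1) = 0 then 2 ^ B - 1 else 0

lemma isNarrow_gridMask (B N d : ℕ) : IsNarrow B (gridMask B N d) :=
  isNarrow_packBelow fun _ _ => Nat.sub_lt (by positivity) one_pos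

lemma isNarrow_faceMask (B N d s : ℕ) : IsNarrow B (faceMask B N d s) :=
  isNarrow_packBelow fun l _ => by
    split_ifs
    exacts [Nat.sub_lt (by positivity) one_pos, by positivity]

lemma lane_faceMask_eq_zero {s l : ℕ} (h : l / s % (N + 1) ≠ 0) :
    lane (B + 1) (faceMask B N d s) l = 0 := by
  rw [faceMask, lane_packBelow fun l _ => ?_, if_neg h, ite_self]
  split_ifs
  exacts [(Nat.sub_lt (by positivity) one_pos).trans (Nat.pow_lt_pow_succ one_lt_two),
    by positivity]

lemma lane_faceMask_shiftLeft_eq_zero {s t l : ℕ} (hs : 0 < s) (ht : t ≤ N)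
    (h : l / s % (N + 1) ≠ t) :
    lane (B + 1) (faceMask B N d s <<< ((B + 1) * (s * t))) l = 0 := by
  rw [lane_shiftLeft]
  split_ifs with hle
  · refine lane_faceMask_eq_zero fun hmod => h ?_
    rw [Nat.sub_mul_div] at hmod
    have hdiv : t ≤ l / s := (Nat.le_div_iff_mul_le hs).mpr (by rwa [mul_comm])
    rw [← Nat.mod_eq_of_lt (Nat.lt_succ_of_le ht)]
    exact ((Nat.modEq_iff_dvd' hdiv).mpr (Nat.dvd_of_mod_eq_zero hmod)).symm
  · rfl

/-- The coefficients on the lower or upper half along the axis `a`, rounded down. In the lower half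
the `r`-th coefficient is the first entry of the `r`-th row of de Casteljau's triangle, and in the
upper half the `(N - r)`-th coefficient is its last entry. -/
def halve (B N d : ℕ) (a : Fin d) (upper : Bool) (p : ℕ) : ℕ :=
  orRange (fun r =>
    bif upper then
      averageIter B ((N + 1) ^ (a : ℕ)) (gridMask B N d) p r &&&
        (faceMask B N d ((N + 1) ^ (a : ℕ)) <<< ((B + 1) * ((N + 1) ^ (a : ℕ) * (N - r))))
    else
      (averageIter B ((N + 1) ^ (a : ℕ)) (gridMask B N d) p r &&&
        faceMask B N d ((N + 1) ^ (a : ℕ))) <<< ((B + 1) * ((N + 1) ^ (a : ℕ) * r)))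
    (N + 1)

lemma isNarrow_halve (a : Fin d) (upper : Bool) (p : ℕ) : IsNarrow B (halve B N d a upper p) := by
  refine isNarrow_orRange (fun r => ?_) _
  cases upper
  exacts [((isNarrow_faceMask B N d _).and_right _).shiftLeft _,
    ((isNarrow_faceMask B N d _).shiftLeft _).and_right _]

lemma lane_halve_le {p : ℕ} (hp : IsNarrow B p) (a : Fin d) (upper : Bool) {I : Fin d → ℕ}
    (hI : ∀ b, I b ≤ N) :
    (lane (B + 1) (halve B N d a upper p) (gridIndex N I) : ℝ) ≤
      halfCoeff N upper
        (fun j => (lane (B + 1) p (gridIndex N (Function.update I a j)) : ℝ)) (I a) := by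
  have hs : 0 < (N + 1) ^ (a : ℕ) := by positivity
  have hdigit := gridIndex_div_mod hI a
  have hindex : gridIndex N I =
      gridIndex N (Function.update I a 0) + (N + 1) ^ (a : ℕ) * I a := by
    rw [← gridIndex_update, Function.update_eq_self]
  have hrow := lane_averageIter_le (isNarrow_gridMask B N d) hp ((N + 1) ^ (a : ℕ))
    (gridIndex N (Function.update I a 0))
  simp only [← gridIndex_update] at hrow
  cases upper
  · refine le_trans (Nat.cast_le.mpr ((lane_orRange_le (k := I a) fun r hr hne => ?_).trans ?_))
      (hrow (I a) 0)
    · simp only [cond_false]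
      rw [Nat.shiftLeft_and_distrib, lane_and, lane_faceMask_shiftLeft_eq_zero hs (by omega)
        (hdigit.trans_ne hne.symm), Nat.and_zero]
    · simp only [cond_false]
      rw [lane_shiftLeft, if_pos (hindex ▸ Nat.le_add_left _ _), lane_and]
      refine Nat.and_le_left.trans_eq (congrArg _ ?_)
      rw [hindex, Nat.add_sub_cancel]
  · refine le_trans (Nat.cast_le.mpr
      ((lane_orRange_le (k := N - I a) fun r hr hne => ?_).trans ?_)) (hrow (N - I a) (I a))
    · simp only [cond_true]
      rw [lane_and, lane_faceMask_shiftLeft_eq_zero hs (by omega)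
        (hdigit.trans_ne (by have := hI a; omega)), Nat.and_zero]
    · simp only [cond_true]
      rw [lane_and, Function.update_eq_self]
      exact Nat.and_le_left

/-- The polynomial function whose Bernstein coefficients are the lanes of `p`. -/
def laneForm (B N p : ℕ) (x : Fin d → ℝ) : ℝ :=
  tensorForm N (fun I => (lane (B + 1) p (gridIndex N I) : ℝ)) x

lemma laneForm_halve_le {p : ℕ} (hp : IsNarrow B p) (a : Fin d) (upper : Bool) {x : Fin d → ℝ}
    (hx : ∀ b, x b ∈ Set.Icc 0 1) :
    laneForm B N (halve B N d a upper p) x ≤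
      laneForm B N p (Function.update x a (halfMap upper (x a))) :=
  tensorForm_le_of_le_halfCoeff a upper (fun _ hI => lane_halve_le hp a upper hI) hx

/-- The mask of the bit of weight `2 ^ (B - 1)` in all lanes of a grid. -/
def thresholdMask (B N d : ℕ) : ℕ := packBelow (B + 1) ((N + 1) ^ d) fun _ => 2 ^ (B - 1)

lemma le_lane_of_and_thresholdMask {p l : ℕ} (h : p &&& thresholdMask B N d = thresholdMask B N d)
    (hl : l < (N + 1) ^ d) : 2 ^ (B - 1) ≤ lane (B + 1) p l := by
  have hmask : lane (B + 1) (thresholdMask B N d) l = 2 ^ (B - 1) := by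
    rw [thresholdMask, lane_packBelow fun _ _ => Nat.pow_lt_pow_right one_lt_two (by omega),
      if_pos hl]
  rw [← hmask, ← h, lane_and]
  exact Nat.and_le_left

lemma le_laneForm_of_and_thresholdMask {p : ℕ}
    (h : p &&& thresholdMask B N d = thresholdMask B N d) {x : Fin d → ℝ}
    (hx : ∀ b, x b ∈ Set.Icc 0 1) : 2 ^ (B - 1) ≤ laneForm B N p x := by
  rw [← tensorForm_const N (2 ^ (B - 1)) x]
  exact tensorForm_mono
    (fun I hI => mod_cast le_lane_of_and_thresholdMask h (gridIndex_lt hI)) hx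

end Halving

/-! ### Branch and bound over dyadic cells -/

section DyadicCell

/-- The dyadic interval `[index / 2 ^ level, (index + 1) / 2 ^ level]` inside `[0, 1]`. -/
structure DyadicCell where
  index : ℕ
  level : ℕ

namespace DyadicCell

variable {c c' : DyadicCell} {x y : ℝ}

/-- Membership in a cell. Cells are half-open on the right, except that the last cell of each level
contains `1`, so that the cells of one level partition `[0, 1]`. -/
structure Mem (c : DyadicCell) (y : ℝ) : Prop where
  le : c.index ≤ 2 ^ c.level * y
  lt_or_eq_one : y < 1 ∧ 2 ^ c.level * y < c.index + 1 ∨ y = 1 ∧ c.index + 1 = 2 ^ c.level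

/-- The lower or upper half of a cell. -/
def half (c : DyadicCell) (upper : Bool) : DyadicCell :=
  ⟨2 * c.index + bif upper then 1 else 0, c.level + 1⟩

/-- The coordinate of `y` relative to a cell, with values in `[0, 1]` for `y` in the cell. -/
def relCoord (c : DyadicCell) (y : ℝ) : ℝ := 2 ^ c.level * y - c.index

lemma Mem.le_succ (h : c.Mem y) : 2 ^ c.level * y ≤ c.index + 1 := by
  rcases h.lt_or_eq_one with ⟨-, hlt⟩ | ⟨rfl, heq⟩
  · exact hlt.le
  · rw [mul_one]
    exact_mod_cast heq.ge

lemma Mem.index_lt (h : c.Mem y) : c.index < 2 ^ c.level := by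
  rcases h.lt_or_eq_one with ⟨hy, -⟩ | ⟨-, heq⟩
  · exact_mod_cast h.le.trans_lt (mul_lt_of_lt_one_right (by positivity) hy)
  · omega

lemma Mem.relCoord_mem_Icc (h : c.Mem y) : c.relCoord y ∈ Set.Icc 0 1 :=
  ⟨sub_nonneg.mpr h.le, sub_le_iff_le_add'.mpr h.le_succ⟩

lemma mem_root (hy : y ∈ Set.Icc 0 1) : (⟨0, 0⟩ : DyadicCell).Mem y where
  le := by simpa using hy.1
  lt_or_eq_one := by simpa using lt_or_eq_of_le hy.2

lemma Mem.exists_half (h : c.Mem y) : ∃ upper, (c.half upper).Mem y := by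
  have hle := h.le
  have hindex : ((c.index + 1 : ℕ) : ℝ) ≤ (2 ^ c.level : ℕ) := Nat.cast_le.mpr h.index_lt
  push_cast at hindex
  rcases lt_or_ge (2 ^ (c.level + 1) * y) (2 * c.index + 1) with hlow | hup
  · refine ⟨false, ⟨?_, Or.inl ⟨?_, ?_⟩⟩⟩
    · simp only [half, cond_false, add_zero, Nat.cast_mul, Nat.cast_ofNat, pow_succ]
      linarith
    · by_contra! hy
      have := mul_le_mul_of_nonneg_left hy (show (0 : ℝ) ≤ 2 ^ (c.level + 1) by positivity)
      rw [pow_succ] at this hlow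
      linarith
    · simpa [half] using hlow
  · refine ⟨true, ⟨by simpa [half] using hup, ?_⟩⟩
    simp only [half, cond_true, pow_succ]
    refine h.lt_or_eq_one.imp (fun hlt => ⟨hlt.1, ?_⟩) fun heq => ⟨heq.1, by lia⟩
    push_cast
    linarith [hlt.2]

lemma halfMap_relCoord_half (c : DyadicCell) (upper : Bool) (y : ℝ) :
    halfMap upper ((c.half upper).relCoord y) = c.relCoord y := by
  cases upper <;>
  · simp only [halfMap, half, relCoord, cond_true, cond_false, pow_succ, Nat.cast_add,
      Nat.cast_mul, Nat.cast_ofNat, Nat.cast_one, Nat.cast_zero]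
    ring

/-- All points of `c` lie to the right of all points of `c'`. -/
def isRightOf (c c' : DyadicCell) : Bool :=
  (c'.index + 1) * 2 ^ c.level ≤ c.index * 2 ^ c'.level

lemma Mem.lt_of_isRightOf (hx : c.Mem x) (hy : c'.Mem y) (h : c.isRightOf c') : y < x := by
  have hle : (c'.index + 1) * 2 ^ c.level ≤ c.index * 2 ^ c'.level := of_decide_eq_true h
  rcases hy.lt_or_eq_one with ⟨-, hlt⟩ | ⟨-, heq⟩
  · have hle' : ((c'.index : ℝ) + 1) * 2 ^ c.level ≤ c.index * 2 ^ c'.level := mod_cast hle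
    have hprod : (2 : ℝ) ^ c'.level * 2 ^ c.level * y < 2 ^ c'.level * 2 ^ c.level * x := by
      have h1 := mul_lt_mul_of_pos_right hlt (show (0 : ℝ) < 2 ^ c.level by positivity)
      have h2 := mul_le_mul_of_nonneg_right hx.le (show (0 : ℝ) ≤ 2 ^ c'.level by positivity)
      linarith
    exact lt_of_mul_lt_mul_left hprod (by positivity)
  · rw [heq, mul_comm] at hle
    exact absurd hx.index_lt (not_lt.mpr (le_of_mul_le_mul_right hle (by positivity)))

end DyadicCell

end DyadicCell

section Bisection

variable {B N d : ℕ}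

/-- Checks that the box `c` can be bisected, along the listed axes in turn, into boxes that either
are discarded or have all their Bernstein coefficients above the threshold. -/
def certifies (B N d : ℕ) (discard : (Fin d → DyadicCell) → Bool) :
    List (Fin d) → ℕ → (Fin d → DyadicCell) → Bool
  | [], p, c => discard c || p &&& thresholdMask B N d == thresholdMask B N d
  | a :: axes, p, c =>
    (discard c || p &&& thresholdMask B N d == thresholdMask B N d) ||
      (certifies B N d discard axes (halve B N d a false p)
          (Function.update c a ((c a).half false)) &&
        certifies B N d discard axes (halve B N d a true p)
          (Function.update c a ((c a).half true)))

lemma le_laneForm_of_test {discard : (Fin d → DyadicCell) → Bool} {y : Fin d → ℝ}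
    (hdiscard : ∀ c, discard c → ¬ ∀ b, (c b).Mem (y b)) {p : ℕ} {c : Fin d → DyadicCell}
    (h : (discard c || p &&& thresholdMask B N d == thresholdMask B N d) = true)
    (hy : ∀ b, (c b).Mem (y b)) : 2 ^ (B - 1) ≤ laneForm B N p fun b => (c b).relCoord (y b) := by
  rw [Bool.or_eq_true, beq_iff_eq] at h
  exact le_laneForm_of_and_thresholdMask (h.resolve_left fun hc => hdiscard c hc hy)
    fun b => (hy b).relCoord_mem_Icc

lemma relCoord_eq_update_halfMap (c : Fin d → DyadicCell) (a : Fin d) (upper : Bool)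
    (y : Fin d → ℝ) :
    (fun b => (c b).relCoord (y b)) =
      Function.update
        (fun b => (Function.update c a ((c a).half upper) b).relCoord (y b)) a
        (halfMap upper ((Function.update c a ((c a).half upper) a).relCoord (y a))) := by
  funext b
  rcases eq_or_ne b a with rfl | hb
  · simp only [Function.update_self, DyadicCell.halfMap_relCoord_half]
  · simp only [Function.update_of_ne hb]

lemma le_laneForm_of_certifies {discard : (Fin d → DyadicCell) → Bool} {y : Fin d → ℝ}
    (hdiscard : ∀ c, discard c → ¬ ∀ b, (c b).Mem (y b)) {axes : List (Fin d)} {p : ℕ}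
    {c : Fin d → DyadicCell} (hp : IsNarrow B p) (h : certifies B N d discard axes p c)
    (hy : ∀ b, (c b).Mem (y b)) : 2 ^ (B - 1) ≤ laneForm B N p fun b => (c b).relCoord (y b) := by
  induction axes generalizing p c with
  | nil => exact le_laneForm_of_test hdiscard h hy
  | cons a axes ih =>
    rw [certifies, Bool.or_eq_true, Bool.and_eq_true] at h
    rcases h with htest | ⟨hl, hu⟩
    · exact le_laneForm_of_test hdiscard htest hy
    obtain ⟨side, hside⟩ := (hy a).exists_half
    have hy' : ∀ b, (Function.update c a ((c a).half side) b).Mem (y b) := fun b => by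
      rcases eq_or_ne b a with rfl | hb
      · simpa only [Function.update_self] using hside
      · simpa only [Function.update_of_ne hb] using hy b
    rw [relCoord_eq_update_halfMap c a side y]
    refine le_trans ?_ (laneForm_halve_le hp a side fun b => (hy' b).relCoord_mem_Icc)
    cases side
    exacts [ih (isNarrow_halve a _ _) hl hy', ih (isNarrow_halve a _ _) hu hy']

end Bisection

section GramCell

variable {c c₀ c₁ c₂ : DyadicCell} {x y z : ℝ}

/-- The inner product in `[-1, 1 / 2]` that corresponds to the coordinate `y ∈ [0, 1]`. -/
noncomputable def cosine (y : ℝ) : ℝ := 3 / 2 * y - 1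

namespace DyadicCell

/-- A common denominator of the cosines of the endpoints of a cell. -/
def cosDenom (c : DyadicCell) : ℤ := 2 ^ (c.level + 1)

/-- The numerator of the cosine of the left endpoint. -/
def cosLower (c : DyadicCell) : ℤ := 3 * c.index - c.cosDenom

/-- The numerator of the cosine of the right endpoint. -/
def cosUpper (c : DyadicCell) : ℤ := 3 * (c.index + 1) - c.cosDenom

/-- An upper bound for `c.cosDenom ^ 2 * (1 - u ^ 2)` over the cosines `u` of a cell. -/
def sinSqUpper (c : DyadicCell) : ℤ :=
  c.cosDenom ^ 2 - max 0 (max c.cosLower (-c.cosUpper)) ^ 2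

lemma cosDenom_pos (c : DyadicCell) : (0 : ℝ) < c.cosDenom := by
  simp [cosDenom]

lemma Mem.cosLower_le (h : c.Mem y) : c.cosLower ≤ c.cosDenom * cosine y := by
  have := h.le
  simp only [cosLower, cosDenom, cosine, pow_succ]
  push_cast
  linarith

lemma Mem.le_cosUpper (h : c.Mem y) : c.cosDenom * cosine y ≤ c.cosUpper := by
  have := h.le_succ
  simp only [cosUpper, cosDenom, cosine, pow_succ]
  push_cast
  linarith

lemma Mem.le_sinSqUpper (h : c.Mem y) :
    (c.cosDenom : ℝ) ^ 2 * (1 - cosine y ^ 2) ≤ c.sinSqUpper := by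
  have habs : ((max 0 (max c.cosLower (-c.cosUpper)) : ℤ) : ℝ) ≤ |c.cosDenom * cosine y| := by
    push_cast
    exact max_le (abs_nonneg _) (max_le (h.cosLower_le.trans (le_abs_self _))
      ((neg_le_neg h.le_cosUpper).trans (neg_le_abs _)))
  have hsq := pow_le_pow_left₀ (mod_cast le_max_left _ _) habs 2
  rw [sq_abs] at hsq
  rw [sinSqUpper]
  push_cast at hsq ⊢
  linarith [mul_pow (c.cosDenom : ℝ) (cosine y) 2]

end DyadicCell

lemma min_mul_le_mul {a b u : ℝ} (ha : a ≤ u) (hb : u ≤ b) (v : ℝ) :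
    min (a * v) (b * v) ≤ u * v := by
  rcases le_total 0 v with hv | hv
  · exact min_le_of_left_le (mul_le_mul_of_nonneg_right ha hv)
  · exact min_le_of_right_le (mul_le_mul_of_nonpos_right hb hv)

/-- The minimum of the products of the endpoints of two intervals. -/
def cornerMin {R : Type*} [Ring R] [LinearOrder R] (a b a' b' : R) : R :=
  min (min (a * a') (a * b')) (min (b * a') (b * b'))

lemma cornerMin_le_mul {a b a' b' u v : ℝ} (ha : a ≤ u) (hb : u ≤ b) (ha' : a' ≤ v)
    (hb' : v ≤ b') : cornerMin a b a' b' ≤ u * v := by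
  have hside : ∀ w, min (w * a') (w * b') ≤ w * v := fun w => by
    simpa only [mul_comm] using min_mul_le_mul ha' hb' w
  exact (min_le_min (hside a) (hside b)).trans (min_mul_le_mul ha hb v)

/-- A lower bound for `|t - u * v|`, scaled by the common denominator, over the cosines `u`, `v`,
`t` of three cells. It is positive only if the interval of `t` is disjoint from the range of the
products `u * v`. -/
def gramGap (c₀ c₁ c₂ : DyadicCell) : ℤ :=
  max
    (cornerMin c₀.cosLower c₀.cosUpper c₁.cosLower c₁.cosUpper * c₂.cosDenom -
      c₂.cosUpper * (c₀.cosDenom * c₁.cosDenom))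
    (c₂.cosLower * (c₀.cosDenom * c₁.cosDenom) +
      cornerMin (-c₀.cosUpper) (-c₀.cosLower) c₁.cosLower c₁.cosUpper * c₂.cosDenom)

lemma gramGap_le_abs (hx : c₀.Mem x) (hy : c₁.Mem y) (hz : c₂.Mem z) :
    (gramGap c₀ c₁ c₂ : ℝ) ≤
      |c₀.cosDenom * c₁.cosDenom * c₂.cosDenom * (cosine z - cosine x * cosine y)| := by
  have hD : (0 : ℝ) < c₀.cosDenom * c₁.cosDenom := mul_pos c₀.cosDenom_pos c₁.cosDenom_pos
  have hlow := mul_le_mul_of_nonneg_right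
    (cornerMin_le_mul hx.cosLower_le hx.le_cosUpper hy.cosLower_le hy.le_cosUpper)
    c₂.cosDenom_pos.le
  have hhigh := mul_le_mul_of_nonneg_right
    (cornerMin_le_mul (neg_le_neg hx.le_cosUpper) (neg_le_neg hx.cosLower_le) hy.cosLower_le
      hy.le_cosUpper) c₂.cosDenom_pos.le
  have hlower := mul_le_mul_of_nonneg_right hz.cosLower_le hD.le
  have hupper := mul_le_mul_of_nonneg_right hz.le_cosUpper hD.le
  rw [gramGap]
  push_cast [cornerMin] at hlow hhigh ⊢
  refine max_le (le_trans ?_ (neg_le_abs _)) (le_trans ?_ (le_abs_self _))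
  · linarith
  · linarith

/-- No point `(x, y, z)` of the box `c` with `x ≤ y ≤ z` has cosines with a positive semidefinite
Gram matrix. -/
def isInfeasible (c : Fin 3 → DyadicCell) : Bool :=
  ((c 0).isRightOf (c 1) || (c 1).isRightOf (c 2)) ||
    (decide (0 < gramGap (c 0) (c 1) (c 2)) &&
      decide ((c 0).sinSqUpper * (c 1).sinSqUpper * (c 2).cosDenom ^ 2 <
        gramGap (c 0) (c 1) (c 2) ^ 2))

lemma gram_det_neg_of_gramGap (hx : c₀.Mem x) (hy : c₁.Mem y) (hz : c₂.Mem z)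
    (hxu : cosine x ^ 2 ≤ 1) (hyu : cosine y ^ 2 ≤ 1) (hpos : 0 < gramGap c₀ c₁ c₂)
    (hlt : c₀.sinSqUpper * c₁.sinSqUpper * c₂.cosDenom ^ 2 < gramGap c₀ c₁ c₂ ^ 2) :
    1 + 2 * cosine x * cosine y * cosine z - cosine x ^ 2 - cosine y ^ 2 - cosine z ^ 2 < 0 := by
  have hsin₀ := hx.le_sinSqUpper
  have hsin : c₀.cosDenom ^ 2 * (1 - cosine x ^ 2) * (c₁.cosDenom ^ 2 * (1 - cosine y ^ 2)) ≤
      (c₀.sinSqUpper : ℝ) * c₁.sinSqUpper :=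
    mul_le_mul hsin₀ hy.le_sinSqUpper (mul_nonneg (sq_nonneg _) (sub_nonneg.mpr hyu))
      ((mul_nonneg (sq_nonneg _) (sub_nonneg.mpr hxu)).trans hsin₀)
  have hgap := pow_le_pow_left₀ (Int.cast_nonneg hpos.le) (gramGap_le_abs hx hy hz) 2
  rw [sq_abs] at hgap
  have hlt' : (c₀.sinSqUpper : ℝ) * c₁.sinSqUpper * c₂.cosDenom ^ 2 < gramGap c₀ c₁ c₂ ^ 2 :=
    mod_cast hlt
  have hscaled : ((c₀.cosDenom : ℝ) * c₁.cosDenom * c₂.cosDenom) ^ 2 *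
      (1 + 2 * cosine x * cosine y * cosine z - cosine x ^ 2 - cosine y ^ 2 - cosine z ^ 2) <
        0 := by
    linarith [mul_le_mul_of_nonneg_right hsin (sq_nonneg (c₂.cosDenom : ℝ))]
  exact neg_of_mul_neg_right hscaled (sq_nonneg _)

lemma not_forall_mem_of_isInfeasible {v : Fin 3 → ℝ} (hu : ∀ b, cosine (v b) ^ 2 ≤ 1)
    (h01 : v 0 ≤ v 1) (h12 : v 1 ≤ v 2)
    (hgram : 0 ≤ 1 + 2 * cosine (v 0) * cosine (v 1) * cosine (v 2) - cosine (v 0) ^ 2 -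
      cosine (v 1) ^ 2 - cosine (v 2) ^ 2)
    {c : Fin 3 → DyadicCell} (hc : isInfeasible c) : ¬ ∀ b, (c b).Mem (v b) := by
  intro hmem
  simp only [isInfeasible, Bool.or_eq_true, Bool.and_eq_true, decide_eq_true_eq] at hc
  rcases hc with (h | h) | ⟨hpos, hlt⟩
  · exact h01.not_gt ((hmem 0).lt_of_isRightOf (hmem 1) h)
  · exact h12.not_gt ((hmem 1).lt_of_isRightOf (hmem 2) h)
  · exact hgram.not_gt
      (gram_det_neg_of_gramGap (hmem 0) (hmem 1) (hmem 2) (hu 0) (hu 1) hpos hlt)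

end GramCell

/-! ### Multihomogeneous integer forms and Kronecker substitution -/

section BoundedForm

variable {d : ℕ} {n n' : Fin d → ℕ} {M M' : ℤ} {p q : MvPolynomial (Fin d × Bool) ℤ}

/-- `p` is a form of degree `n b` in the pair of variables `X (b, true)`, `X (b, false)` for each
`b`, and the absolute values of its coefficients add up to at most `M`. The second condition is
phrased with arbitrary sets of monomials so that no reference to the support of `p` is needed. -/
structure IsBoundedForm (n : Fin d → ℕ) (M : ℤ) (p : MvPolynomial (Fin d × Bool) ℤ) : Prop where
  isWeightedHomogeneous : IsWeightedHomogeneous (fun v : Fin d × Bool => Pi.single v.1 1) p n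
  sum_abs_coeff_le : ∀ s : Finset (Fin d × Bool →₀ ℕ), ∑ m ∈ s, |p.coeff m| ≤ M

namespace IsBoundedForm

lemma bound_nonneg (hp : IsBoundedForm n M p) : 0 ≤ M := by
  simpa using hp.sum_abs_coeff_le ∅

lemma intCast (c : ℤ) : IsBoundedForm (0 : Fin d → ℕ) |c| (c : MvPolynomial (Fin d × Bool) ℤ) where
  isWeightedHomogeneous := by
    simpa using isWeightedHomogeneous_C (fun v : Fin d × Bool => Pi.single v.1 1) c
  sum_abs_coeff_le s := by
    have hcoeff : ∀ m,
        |coeff m (c : MvPolynomial (Fin d × Bool) ℤ)| = if 0 = m then |c| else 0 := by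
      intro m
      rw [← map_intCast (C : ℤ →+* MvPolynomial (Fin d × Bool) ℤ) c, coeff_C]
      split_ifs <;> simp
    simp only [hcoeff, sum_ite_eq]
    split_ifs <;> simp

lemma X (v : Fin d × Bool) : IsBoundedForm (Pi.single v.1 1) 1 (MvPolynomial.X v) where
  isWeightedHomogeneous := isWeightedHomogeneous_X ℤ _ v
  sum_abs_coeff_le s := by
    simp only [coeff_X, apply_ite abs, abs_one, abs_zero, sum_ite_eq]
    split_ifs <;> simp

lemma neg (hp : IsBoundedForm n M p) : IsBoundedForm n M (-p) where
  isWeightedHomogeneous := (weightedHomogeneousSubmodule ℤ _ n).neg_mem hp.isWeightedHomogeneous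
  sum_abs_coeff_le s := by simpa using hp.sum_abs_coeff_le s

lemma add (hp : IsBoundedForm n M p) (hq : IsBoundedForm n M' q) :
    IsBoundedForm n (M + M') (p + q) where
  isWeightedHomogeneous := hp.isWeightedHomogeneous.add hq.isWeightedHomogeneous
  sum_abs_coeff_le s := calc
    ∑ m ∈ s, |(p + q).coeff m| ≤ ∑ m ∈ s, (|p.coeff m| + |q.coeff m|) :=
      sum_le_sum fun m _ => by rw [coeff_add]; exact abs_add_le _ _
    _ ≤ M + M' := by
      rw [sum_add_distrib]
      exact add_le_add (hp.sum_abs_coeff_le s) (hq.sum_abs_coeff_le s)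

lemma double (hp : IsBoundedForm n M p) : IsBoundedForm n (2 * M) (2 * p) := by
  rw [two_mul, two_mul]
  exact hp.add hp

lemma sub (hp : IsBoundedForm n M p) (hq : IsBoundedForm n M' q) :
    IsBoundedForm n (M + M') (p - q) :=
  sub_eq_add_neg p q ▸ hp.add hq.neg

lemma mul (hp : IsBoundedForm n M p) (hq : IsBoundedForm n' M' q) :
    IsBoundedForm (n + n') (M * M') (p * q) where
  isWeightedHomogeneous := hp.isWeightedHomogeneous.mul hq.isWeightedHomogeneous
  sum_abs_coeff_le s := by
    classical
    have hdisj : (s : Set (Fin d × Bool →₀ ℕ)).PairwiseDisjoint antidiagonal :=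
      fun m _ m' _ hne => disjoint_left.mpr fun x hx hx' =>
        hne ((mem_antidiagonal.mp hx).symm.trans (mem_antidiagonal.mp hx'))
    set t := s.biUnion antidiagonal
    calc ∑ m ∈ s, |(p * q).coeff m|
        ≤ ∑ m ∈ s, ∑ x ∈ antidiagonal m, |p.coeff x.1| * |q.coeff x.2| :=
          sum_le_sum fun m _ => by
            rw [coeff_mul]
            exact (abs_sum_le_sum_abs _ _).trans_eq (sum_congr rfl fun x _ => abs_mul _ _)
      _ = ∑ x ∈ t, |p.coeff x.1| * |q.coeff x.2| := (sum_biUnion hdisj).symm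
      _ ≤ ∑ x ∈ t.image Prod.fst ×ˢ t.image Prod.snd, |p.coeff x.1| * |q.coeff x.2| :=
          sum_le_sum_of_subset_of_nonneg subset_product
            fun x _ _ => mul_nonneg (abs_nonneg _) (abs_nonneg _)
      _ = (∑ m ∈ t.image Prod.fst, |p.coeff m|) * ∑ m ∈ t.image Prod.snd, |q.coeff m| := by
          rw [sum_product, sum_mul_sum]
      _ ≤ M * M' := mul_le_mul (hp.sum_abs_coeff_le _) (hq.sum_abs_coeff_le _)
          (sum_nonneg fun _ _ => abs_nonneg _) hp.bound_nonneg

lemma pow (hp : IsBoundedForm n M p) (k : ℕ) : IsBoundedForm (k • n) (M ^ k) (p ^ k) := by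
  induction k with
  | zero => simpa using intCast (d := d) 1
  | succ k ih => rw [succ_nsmul, pow_succ, pow_succ]; exact ih.mul hp

lemma sum {ι : Type*} {s : Finset ι} {M : ι → ℤ} {p : ι → MvPolynomial (Fin d × Bool) ℤ}
    (h : ∀ i ∈ s, IsBoundedForm n (M i) (p i)) : IsBoundedForm n (∑ i ∈ s, M i) (∑ i ∈ s, p i) where
  isWeightedHomogeneous :=
    IsWeightedHomogeneous.sum s p n fun i hi => (h i hi).isWeightedHomogeneous
  sum_abs_coeff_le t := calc
    ∑ m ∈ t, |(∑ i ∈ s, p i).coeff m| ≤ ∑ m ∈ t, ∑ i ∈ s, |(p i).coeff m| :=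
      sum_le_sum fun m _ => by rw [coeff_sum]; exact abs_sum_le_sum_abs _ _
    _ ≤ ∑ i ∈ s, M i := by
      rw [sum_comm]
      exact sum_le_sum fun i hi => (h i hi).sum_abs_coeff_le t

lemma abs_coeff_le (hp : IsBoundedForm n M p) (m : Fin d × Bool →₀ ℕ) : |p.coeff m| ≤ M := by
  simpa using hp.sum_abs_coeff_le {m}

end IsBoundedForm

end BoundedForm

section Expansion

variable {d N : ℕ} {M : ℤ} {p : MvPolynomial (Fin d × Bool) ℤ} {R : Type*} [CommRing R]

/-- The exponent vector of the monomial `∏ b, X (b, true) ^ I b * X (b, false) ^ (N - I b)`. -/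
noncomputable def gridExponent (N : ℕ) (I : Fin d → ℕ) : Fin d × Bool →₀ ℕ :=
  Finsupp.equivFunOnFinite.symm fun v => bif v.2 then I v.1 else N - I v.1

lemma mem_piFinset_range_succ {I : Fin d → ℕ} :
    I ∈ Fintype.piFinset (fun _ => range (N + 1)) ↔ ∀ b, I b ≤ N := by
  simp only [Fintype.mem_piFinset, mem_range, Nat.lt_succ_iff]

lemma gridExponent_injective : Function.Injective (gridExponent N : (Fin d → ℕ) → _) :=
  fun _ _ h => funext fun b => DFunLike.congr_fun h (b, true)

lemma IsBoundedForm.add_eq_of_mem_support {n : Fin d → ℕ} (hp : IsBoundedForm n M p)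
    {m : Fin d × Bool →₀ ℕ} (hm : m ∈ p.support) (b : Fin d) :
    m (b, true) + m (b, false) = n b := by
  have hweight := congrFun (hp.isWeightedHomogeneous (mem_support_iff.mp hm)) b
  simpa [Finsupp.weight_apply, Finsupp.sum_fintype, Fintype.sum_prod_type, Finset.sum_apply,
    Pi.single_apply, sum_add_distrib] using hweight

lemma IsBoundedForm.support_subset (hp : IsBoundedForm (fun _ => N) M p) :
    p.support ⊆ (Fintype.piFinset fun _ => range (N + 1)).image (gridExponent N) := by
  intro m hm
  have hsum := hp.add_eq_of_mem_support hm
  refine mem_image.mpr ⟨fun b => m (b, true), mem_piFinset_range_succ.mpr fun b => ?_, ?_⟩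
  · exact hsum b ▸ Nat.le_add_right _ _
  · ext ⟨b, _ | _⟩
    · exact (Nat.eq_sub_of_add_eq' (hsum b)).symm
    · rfl

lemma IsBoundedForm.aeval_eq_sum (hp : IsBoundedForm (fun _ => N) M p) (f : Fin d × Bool → R) :
    aeval f p = ∑ I ∈ Fintype.piFinset fun _ => range (N + 1),
      ((p.coeff (gridExponent N I) : ℤ) : R) *
        ∏ b, f (b, true) ^ I b * f (b, false) ^ (N - I b) := by
  rw [aeval_def, eval₂_eq', sum_subset hp.support_subset fun m _ hm => by
    rw [notMem_support_iff.mp hm, map_zero, zero_mul], sum_image gridExponent_injective.injOn]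
  refine sum_congr rfl fun I _ => ?_
  simp [Fintype.prod_prod_type, gridExponent]

lemma IsBoundedForm.aeval_mul (hp : IsBoundedForm (fun _ => N) M p) (s : R)
    (f : Fin d × Bool → R) : aeval (fun v => s * f v) p = s ^ (N * d) * aeval f p := by
  rw [hp.aeval_eq_sum, hp.aeval_eq_sum, mul_sum]
  refine sum_congr rfl fun I hI => ?_
  have hfactor : ∀ b ∈ univ, (s * f (b, true)) ^ I b * (s * f (b, false)) ^ (N - I b) =
      s ^ N * (f (b, true) ^ I b * f (b, false) ^ (N - I b)) := fun b _ => by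
    have hb : I b + (N - I b) = N := Nat.add_sub_of_le (mem_piFinset_range_succ.mp hI b)
    rw [mul_pow, mul_pow, mul_mul_mul_comm, ← pow_add, hb]
  rw [prod_congr rfl hfactor, prod_mul_distrib, prod_const, card_univ, Fintype.card_fin,
    ← pow_mul]
  ring

lemma sum_piFinset_gridIndex {A : Type*} [AddCommMonoid A] (g : ℕ → A) :
    ∑ I ∈ Fintype.piFinset fun _ : Fin d => range (N + 1), g (gridIndex N I) =
      ∑ l ∈ range ((N + 1) ^ d), g l := by
  set G := Fintype.piFinset fun _ : Fin d => range (N + 1)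
  have hle : ∀ I ∈ G, ∀ b, I b ≤ N := fun I hI => mem_piFinset_range_succ.mp hI
  have hmaps : Set.MapsTo (gridIndex N) (G : Set (Fin d → ℕ)) (range ((N + 1) ^ d)) :=
    fun I hI => mem_coe.mpr (mem_range.mpr (gridIndex_lt (hle I hI)))
  have hinj : Set.InjOn (gridIndex N) (G : Set (Fin d → ℕ)) := fun I hI J hJ h => funext fun b => by
    rw [← gridIndex_div_mod (hle I hI) b, h, gridIndex_div_mod (hle J hJ) b]
  exact sum_nbij (gridIndex N) hmaps hinj
    (surjOn_of_injOn_of_card_le _ hmaps hinj (by simp [G])) fun _ _ => rfl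

end Expansion

section Kronecker

variable {d N W : ℕ} {M : ℤ} {p : MvPolynomial (Fin d × Bool) ℤ}

/-- The evaluation point at which a form of degree `N` in each pair of variables takes the value
`∑ I, coeff I * 2 ^ (W * gridIndex N I)`, from which its coefficients can be read off. -/
def kroneckerPoint (W N : ℕ) (v : Fin d × Bool) : ℤ :=
  bif v.2 then 2 ^ (W * (N + 1) ^ (v.1 : ℕ)) else 1

/-- The integer whose `W`-bit lanes are the coefficients of the form with value `Φ` at
`kroneckerPoint W N`, each increased by `2 ^ (W - 1)` to make it nonnegative. -/
def packedCoeffs (W N d : ℕ) (Φ : ℤ) : ℕ :=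
  (Φ + packBelow W ((N + 1) ^ d) fun _ => 2 ^ (W - 1)).toNat

lemma IsBoundedForm.aeval_kroneckerPoint (hp : IsBoundedForm (fun _ => N) M p) :
    aeval (kroneckerPoint W N) p = ∑ I ∈ Fintype.piFinset fun _ => range (N + 1),
      p.coeff (gridExponent N I) * 2 ^ (W * gridIndex N I) := by
  rw [hp.aeval_eq_sum]
  refine sum_congr rfl fun I _ => ?_
  simp only [kroneckerPoint, cond_true, cond_false, one_pow, mul_one, ← pow_mul, Int.cast_id]
  rw [prod_pow_eq_pow_sum, gridIndex, mul_sum]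
  exact congrArg _ (congrArg _ (sum_congr rfl fun b _ => by ring))

lemma IsBoundedForm.lane_packedCoeffs (hp : IsBoundedForm (fun _ => N) M p) (hW : W ≠ 0)
    (hM : M < 2 ^ (W - 1)) {I : Fin d → ℕ} (hI : ∀ b, I b ≤ N) :
    (lane W (packedCoeffs W N d (aeval (kroneckerPoint W N) p)) (gridIndex N I) : ℤ) =
      p.coeff (gridExponent N I) + 2 ^ (W - 1) := by
  set κ : ℕ → ℤ := fun l =>
    p.coeff (gridExponent N fun b : Fin d => l / (N + 1) ^ (b : ℕ) % (N + 1))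
  have hκ : ∀ J : Fin d → ℕ, (∀ b, J b ≤ N) → κ (gridIndex N J) = p.coeff (gridExponent N J) :=
    fun J hJ => by simp only [κ, gridIndex_div_mod hJ]
  have hbound : ∀ l, |κ l| < 2 ^ (W - 1) := fun l => (hp.abs_coeff_le _).trans_lt hM
  have hpow : (2 : ℤ) ^ W = 2 ^ (W - 1) + 2 ^ (W - 1) := by
    rw [← two_mul, ← pow_succ', Nat.sub_one_add_one hW]
  have hcast : ∀ l, ((κ l + 2 ^ (W - 1)).toNat : ℤ) = κ l + 2 ^ (W - 1) := fun l =>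
    Int.toNat_of_nonneg (by linarith [(abs_lt.mp (hbound l)).1])
  have hpacked : packedCoeffs W N d (aeval (kroneckerPoint W N) p) =
      ∑ l ∈ range ((N + 1) ^ d), (κ l + 2 ^ (W - 1)).toNat * 2 ^ (W * l) := by
    have hΦ : aeval (kroneckerPoint W N) p = ∑ l ∈ range ((N + 1) ^ d), κ l * 2 ^ (W * l) := by
      rw [hp.aeval_kroneckerPoint, ← sum_piFinset_gridIndex (d := d) fun l => κ l * 2 ^ (W * l)]
      refine sum_congr rfl fun J hJ => ?_
      rw [hκ J (mem_piFinset_range_succ.mp hJ)]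
    refine (congrArg Int.toNat ?_).trans (Int.toNat_natCast _)
    rw [hΦ, packBelow_eq_sum]
    push_cast [hcast]
    simp only [add_mul, sum_add_distrib]
  rw [hpacked, lane_sum, if_pos (gridIndex_lt hI), hcast, hκ I hI]
  intro l _
  zify
  rw [hcast, hpow]
  linarith [(abs_lt.mp (hbound l)).2]

end Kronecker

section Certificate

variable {d B N W e : ℕ} {M T : ℤ} {p : MvPolynomial (Fin d × Bool) ℤ}
  {Ψ : ℕ} {discard : (Fin d → DyadicCell) → Bool} {axes : List (Fin d)}

/-- The product of the binomial coefficients `N.choose i` over the `d` lowest base-`(N + 1)`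
digits `i` of `l`. -/
def gridChoose (N : ℕ) : ℕ → ℕ → ℕ
  | 0, _ => 1
  | d + 1, l => N.choose (l % (N + 1)) * gridChoose N d (l / (N + 1))

lemma gridChoose_gridIndex {I : Fin d → ℕ} (hI : ∀ b, I b ≤ N) :
    gridChoose N d (gridIndex N I) = ∏ b, N.choose (I b) := by
  induction d with
  | zero => simp [gridChoose]
  | succ d ih =>
    have hsplit : gridIndex N I = I 0 + (N + 1) * gridIndex N (Fin.tail I) := by
      rw [gridIndex, gridIndex, Fin.sum_univ_succ, mul_sum]
      simp only [Fin.val_zero, pow_zero, mul_one, Fin.val_succ, pow_succ, Fin.tail]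
      exact congrArg _ (sum_congr rfl fun b _ => by ring)
    have hlt : I 0 < N + 1 := Nat.lt_succ_of_le (hI 0)
    rw [gridChoose, hsplit, Nat.add_mul_mod_self_left, Nat.mod_eq_of_lt hlt,
      Nat.add_mul_div_left _ _ N.succ_pos, Nat.div_eq_of_lt hlt, zero_add,
      ih (I := Fin.tail I) fun b => hI b.succ, Fin.prod_univ_succ]
    rfl

/-- For `Ψ` the packed coefficients of a form of degree `N` in each of `d` pairs of variables:
the `l`-th Bernstein coefficient of `2 ^ (B - 1) + (T - form) / 2 ^ e` on `[0, 1] ^ d`, rounded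
down. -/
def roundedGap (W B N d e : ℕ) (T : ℤ) (Ψ l : ℕ) : ℤ :=
  ((2 ^ (B - 1 + e) + T) * gridChoose N d l - (lane W Ψ l - 2 ^ (W - 1))) /
    (gridChoose N d l * 2 ^ e)

/-- The rounded Bernstein coefficients `roundedGap`, packed into lanes. -/
def packedGap (W B N d e : ℕ) (T : ℤ) (Ψ : ℕ) : ℕ :=
  packBelow (B + 1) ((N + 1) ^ d) fun l => (roundedGap W B N d e T Ψ l).toNat

/-- The checks which show that a form of degree `N` in each of `d` pairs of variables is at most `T`
on `[0, 1] ^ d` away from the discarded cells, given a bound `M` for its coefficients and the number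
`Ψ` which packs its coefficients into lanes of width `W`. The unit of the rounding is `2 ^ e`. -/
structure IsCertificate (W B N d e : ℕ) (T M : ℤ) (Ψ : ℕ)
    (discard : (Fin d → DyadicCell) → Bool) (axes : List (Fin d)) : Prop where
  width_ne_zero : W ≠ 0
  norm_lt : M < 2 ^ (W - 1)
  gap_mem_Ico : ∀ l < (N + 1) ^ d, roundedGap W B N d e T Ψ l ∈ Set.Ico 0 (2 ^ B)
  certifies : certifies B N d discard axes (packedGap W B N d e T Ψ) fun _ => ⟨0, 0⟩

lemma IsBoundedForm.two_pow_mul_lane_packedGap_le (hp : IsBoundedForm (fun _ => N) M p)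
    (h : IsCertificate W B N d e T M Ψ discard axes)
    (hΨ : packedCoeffs W N d (aeval (kroneckerPoint W N) p) = Ψ)
    {I : Fin d → ℕ} (hI : ∀ b, I b ≤ N) :
    2 ^ e * (lane (B + 1) (packedGap W B N d e T Ψ) (gridIndex N I) : ℤ) *
        ∏ b, (N.choose (I b) : ℤ) ≤
      (2 ^ (B - 1 + e) + T) * ∏ b, (N.choose (I b) : ℤ) - p.coeff (gridExponent N I) := by
  have hcast : ∀ l < (N + 1) ^ d, ((roundedGap W B N d e T Ψ l).toNat : ℤ) =
      roundedGap W B N d e T Ψ l := fun l hl => Int.toNat_of_nonneg (h.gap_mem_Ico l hl).1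
  have hlane : (lane (B + 1) (packedGap W B N d e T Ψ) (gridIndex N I) : ℤ) =
      roundedGap W B N d e T Ψ (gridIndex N I) := by
    rw [packedGap, lane_packBelow, if_pos (gridIndex_lt hI), hcast _ (gridIndex_lt hI)]
    intro l hl
    zify
    rw [hcast l hl]
    exact (h.gap_mem_Ico l hl).2.trans (pow_lt_pow_right₀ one_lt_two B.lt_succ_self)
  rw [hlane, roundedGap, ← hΨ, hp.lane_packedCoeffs h.width_ne_zero h.norm_lt hI,
    gridChoose_gridIndex hI, add_sub_cancel_right, mul_right_comm, mul_comm (2 ^ e), Nat.cast_prod]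
  have hpos : 0 < ∏ b, (N.choose (I b) : ℤ) :=
    prod_pos fun b _ => Nat.cast_pos.mpr (Nat.choose_pos (hI b))
  exact Int.mul_ediv_self_le (by positivity)

lemma prod_bernsteinBasis (I : Fin d → ℕ) (y : Fin d → ℝ) :
    ∏ b, bernsteinBasis N (I b) (y b) =
      (∏ b, (N.choose (I b) : ℝ)) * ∏ b, y b ^ I b * (1 - y b) ^ (N - I b) := by
  simp only [bernsteinBasis, ← prod_mul_distrib, mul_assoc]

lemma IsBoundedForm.two_pow_mul_laneForm_le (hp : IsBoundedForm (fun _ => N) M p)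
    (h : IsCertificate W B N d e T M Ψ discard axes)
    (hΨ : packedCoeffs W N d (aeval (kroneckerPoint W N) p) = Ψ)
    {y : Fin d → ℝ} (hy : ∀ b, y b ∈ Set.Icc 0 1) :
    2 ^ e * laneForm B N (packedGap W B N d e T Ψ) y ≤
      2 ^ (B - 1 + e) + T - aeval (fun v => bif v.2 then y v.1 else 1 - y v.1) p := by
  set A : ℝ := 2 ^ (B - 1 + e) + T
  set C : (Fin d → ℕ) → ℝ := fun I => ∏ b, (N.choose (I b) : ℝ)
  set m : (Fin d → ℕ) → ℝ := fun I => ∏ b, y b ^ I b * (1 - y b) ^ (N - I b)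
  have hone : ∑ I ∈ Fintype.piFinset fun _ => range (N + 1), C I * m I = 1 := by
    simpa only [tensorForm, prod_bernsteinBasis, one_mul] using tensorForm_const N 1 y
  have hm : ∀ I, 0 ≤ m I := fun I => prod_nonneg fun b _ =>
    mul_nonneg (pow_nonneg (hy b).1 _) (pow_nonneg (sub_nonneg.mpr (hy b).2) _)
  calc 2 ^ e * laneForm B N (packedGap W B N d e T Ψ) y
      = ∑ I ∈ Fintype.piFinset fun _ => range (N + 1),
          2 ^ e * lane (B + 1) (packedGap W B N d e T Ψ) (gridIndex N I) * C I * m I := by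
        simp only [laneForm, tensorForm, prod_bernsteinBasis, mul_sum, mul_assoc, C, m]
    _ ≤ ∑ I ∈ Fintype.piFinset fun _ => range (N + 1),
          (A * C I - (p.coeff (gridExponent N I) : ℤ)) * m I := by
        refine sum_le_sum fun I hI => mul_le_mul_of_nonneg_right ?_ (hm I)
        simp only [A, C]
        exact_mod_cast hp.two_pow_mul_lane_packedGap_le h hΨ (mem_piFinset_range_succ.mp hI)
    _ = A - aeval (fun v => bif v.2 then y v.1 else 1 - y v.1) p := by
        simp only [hp.aeval_eq_sum, cond_true, cond_false, sub_mul, sum_sub_distrib, mul_assoc]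
        rw [← mul_sum, hone, mul_one]

theorem IsBoundedForm.aeval_le_of_isCertificate (hp : IsBoundedForm (fun _ => N) M p)
    (h : IsCertificate W B N d e T M Ψ discard axes)
    (hΨ : packedCoeffs W N d (aeval (kroneckerPoint W N) p) = Ψ)
    {y : Fin d → ℝ} (hy : ∀ b, y b ∈ Set.Icc 0 1)
    (hdiscard : ∀ c, discard c → ¬ ∀ b, (c b).Mem (y b)) :
    aeval (fun v => bif v.2 then y v.1 else 1 - y v.1) p ≤ (T : ℝ) := by
  have hnarrow : IsNarrow B (packedGap W B N d e T Ψ) := isNarrow_packBelow fun l hl => by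
    zify
    rw [Int.toNat_of_nonneg (h.gap_mem_Ico l hl).1]
    exact_mod_cast (h.gap_mem_Ico l hl).2
  have hlower := le_laneForm_of_certifies hdiscard hnarrow h.certifies fun b =>
    DyadicCell.mem_root (hy b)
  simp only [DyadicCell.relCoord, pow_zero, one_mul, Nat.cast_zero, sub_zero] at hlower
  have hupper := hp.two_pow_mul_laneForm_le h hΨ hy
  have hscaled := mul_le_mul_of_nonneg_left hlower (by positivity : (0 : ℝ) ≤ 2 ^ e)
  rw [pow_add, mul_comm (2 ^ (B - 1))] at hupper
  linarith

end Certificate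

/-! ### Two-point and three-point kernels -/

section Forms

variable {R S : Type*} [CommRing R] [CommRing S]

/-- The homogenization of degree `n` of the polynomial with coefficients `a`, at `(u : e)`. -/
def homogEval (n : ℕ) (a : ℕ → ℤ) (u e : R) : R := ∑ i ∈ range (n + 1), a i * (u ^ i * e ^ (n - i))

/-- The kernel `∑ i, gᵢ(u) gᵢ(v)`, where `gᵢ` is the polynomial with coefficients `a i`, homogenized
to degree `n` in `(u : eu)` and in `(v : ev)`. -/
def productKernel (n : ℕ) (a : ℕ → ℕ → ℤ) (u eu v ev : R) : R :=
  ∑ i ∈ range (n + 1), homogEval n (a i) u eu * homogEval n (a i) v ev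

/-- The sum over `k ≤ K` of a product kernel of degree `K - k` times a zonal form of degree `k`,
with the projected inner product `w` and the product `r` of squared norms as free arguments. -/
def zonalKernel (K : ℕ) (a : ℕ → ℕ → ℕ → ℤ) (γ : ℕ → ℕ → ℤ) (u eu v ev et w r : R) : R :=
  ∑ k ∈ range (K + 1), et ^ (K - k) * productKernel (K - k) (a k) u eu v ev *
    zonalForm (fun j => (γ k j : R)) k w r

/-- The Bachoc–Vallentin three-point kernel of `x, y, z` on the sphere, as a form of degree `K` in
each of `(u : eu)`, `(v : ev)`, `(t : et)`, which stand for `⟪x, z⟫`, `⟪y, z⟫` and `⟪x, y⟫`. -/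
def threePointKernel (K : ℕ) (a : ℕ → ℕ → ℕ → ℤ) (γ : ℕ → ℕ → ℤ) (u eu v ev t et : R) : R :=
  zonalKernel K a γ u eu v ev et (t * (eu * ev) - u * v * et)
    ((eu ^ 2 - u ^ 2) * (ev ^ 2 - v ^ 2) * et ^ 2)

/-- A combination of zonal forms of degrees `k ≤ K`, homogenized to degree `K` in `(u : e)`. -/
def twoPointKernel (K : ℕ) (c : ℕ → ℤ) (γ : ℕ → ℕ → ℤ) (u e : R) : R :=
  ∑ k ∈ range (K + 1), e ^ (K - k) * c k * zonalForm (fun j => (γ k j : R)) k u (e ^ 2)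

variable {K : ℕ} {a : ℕ → ℕ → ℕ → ℤ} {c : ℕ → ℤ} {γ : ℕ → ℕ → ℤ}

section Map

variable {F : Type*} [FunLike F R S] [RingHomClass F R S]

lemma map_threePointKernel (g : F) (u eu v ev t et : R) :
    g (threePointKernel K a γ u eu v ev t et) =
      threePointKernel K a γ (g u) (g eu) (g v) (g ev) (g t) (g et) := by
  simp only [threePointKernel, zonalKernel, productKernel, homogEval, zonalForm, map_sum, map_mul,
    map_sub, map_pow, map_intCast]

lemma map_twoPointKernel (g : F) (u e : R) :
    g (twoPointKernel K c γ u e) = twoPointKernel K c γ (g u) (g e) := by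
  simp only [twoPointKernel, zonalForm, map_sum, map_mul, map_pow, map_intCast]

end Map

lemma threePointKernel_swap (u eu v ev t et : R) :
    threePointKernel K a γ v ev u eu t et = threePointKernel K a γ u eu v ev t et := by
  have hproduct : ∀ k, productKernel (K - k) (a k) v ev u eu =
      productKernel (K - k) (a k) u eu v ev := fun k => sum_congr rfl fun i _ => mul_comm _ _
  simp only [threePointKernel, zonalKernel, hproduct, mul_comm ev eu, mul_comm v u,
    mul_comm (ev ^ 2 - v ^ 2)]

end Forms

section Positivity

variable {E : Type*} [NormedAddCommGroup E] [InnerProductSpace ℝ E] {K : ℕ}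
  {a : ℕ → ℕ → ℕ → ℤ} {c : ℕ → ℤ} {γ : ℕ → ℕ → ℤ} {S : Finset E} {z : E}

lemma sum_sum_sum_nonneg {ι α : Type*} {s : Finset α} {t : Finset ι} {f : α → α → ι → ℝ}
    (h : ∀ k ∈ t, 0 ≤ ∑ x ∈ s, ∑ y ∈ s, f x y k) : 0 ≤ ∑ x ∈ s, ∑ y ∈ s, ∑ k ∈ t, f x y k := by
  rw [sum_congr rfl fun x _ => sum_comm, sum_comm]
  exact sum_nonneg h

theorem sum_sum_threePointKernel_nonneg {m : ℕ} (hm : Module.finrank ℝ E = m + 1)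
    (hγ : ∀ k ≤ K, IsZonalSeq m k fun j => γ k j) (hS : ∀ x ∈ S, ‖x‖ = 1) (hz : ‖z‖ = 1) :
    0 ≤ ∑ x ∈ S, ∑ y ∈ S, threePointKernel K a γ ⟪x, z⟫ 1 ⟪y, z⟫ 1 ⟪x, y⟫ (1 : ℝ) := by
  simp only [threePointKernel, zonalKernel, productKernel, one_pow, one_mul, mul_one, sum_mul]
  exact sum_sum_sum_nonneg fun k hk => sum_sum_sum_nonneg fun i _ =>
    sum_sum_zonalForm_proj_nonneg hm (hγ k (Nat.lt_succ_iff.mp (mem_range.mp hk))) hS hz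
      fun x => homogEval (K - k) (a k i) ⟪x, z⟫ 1

theorem sum_sum_twoPointKernel_nonneg [FiniteDimensional ℝ E]
    (hγ : ∀ k ≤ K, IsZonalSeq (Module.finrank ℝ E) k fun j => γ k j) (hc : ∀ k, 0 ≤ c k)
    (hS : ∀ x ∈ S, ‖x‖ = 1) :
    0 ≤ ∑ x ∈ S, ∑ y ∈ S, twoPointKernel K c γ ⟪x, y⟫ (1 : ℝ) := by
  simp only [twoPointKernel, one_pow, one_mul]
  refine sum_sum_sum_nonneg fun k hk => ?_
  have hzonal := sum_sum_zonalForm_inner_nonneg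
    (hγ k (Nat.lt_succ_iff.mp (mem_range.mp hk))) S (fun _ => 1) id
  simp only [← mul_sum]
  refine mul_nonneg (Int.cast_nonneg (hc k)) (hzonal.trans_eq ?_)
  exact sum_congr rfl fun x hx => sum_congr rfl fun y hy => by simp [hS x hx, hS y hy]

end Positivity

section Bounds

variable {d K : ℕ} {n n' n'' : Fin d → ℕ} {a : ℕ → ℕ → ℕ → ℤ} {c : ℕ → ℤ} {γ : ℕ → ℕ → ℤ}
  {u eu v ev t et w r : MvPolynomial (Fin d × Bool) ℤ}
  {Mu Meu Mv Mev Mt Met Mw Mr : ℤ}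

namespace IsBoundedForm

lemma homogEval (hu : IsBoundedForm n Mu u) (he : IsBoundedForm n Meu eu) (k : ℕ) (a : ℕ → ℤ) :
    IsBoundedForm (k • n) (KissingNumber.homogEval k (fun i => |a i|) Mu Meu)
      (KissingNumber.homogEval k a u eu) :=
  sum fun i hi => by
    have hik : i + (k - i) = k := Nat.add_sub_of_le (Nat.lt_succ_iff.mp (mem_range.mp hi))
    have hterm := (intCast (a i)).mul ((hu.pow i).mul (he.pow (k - i)))
    rwa [zero_add, ← add_nsmul, hik] at hterm

lemma productKernel (hu : IsBoundedForm n Mu u) (heu : IsBoundedForm n Meu eu)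
    (hv : IsBoundedForm n' Mv v) (hev : IsBoundedForm n' Mev ev) (k : ℕ) (a : ℕ → ℕ → ℤ) :
    IsBoundedForm (k • n + k • n')
      (KissingNumber.productKernel k (fun i l => |a i l|) Mu Meu Mv Mev)
      (KissingNumber.productKernel k a u eu v ev) :=
  sum fun i _ => (hu.homogEval heu k (a i)).mul (hv.homogEval hev k (a i))

lemma zonalForm (hw : IsBoundedForm n Mw w) (hr : IsBoundedForm (2 • n) Mr r) (k : ℕ)
    (γ : ℕ → ℤ) :
    IsBoundedForm (k • n) (KissingNumber.zonalForm (fun j => |γ j|) k Mw Mr)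
      (KissingNumber.zonalForm (fun j => (γ j : MvPolynomial (Fin d × Bool) ℤ)) k w r) :=
  sum fun j hj => by
    have hjk : k - 2 * j + j * 2 = k := by have := mem_range.mp hj; lia
    have hterm := (intCast (γ j)).mul ((hw.pow (k - 2 * j)).mul (hr.pow j))
    rwa [zero_add, ← mul_nsmul', ← add_nsmul, hjk] at hterm

lemma zonalKernel (hu : IsBoundedForm n Mu u) (heu : IsBoundedForm n Meu eu)
    (hv : IsBoundedForm n' Mv v) (hev : IsBoundedForm n' Mev ev) (het : IsBoundedForm n'' Met et)
    (hw : IsBoundedForm (n + n' + n'') Mw w) (hr : IsBoundedForm (2 • (n + n' + n'')) Mr r) :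
    IsBoundedForm (K • (n + n' + n''))
      (KissingNumber.zonalKernel K (fun k i l => |a k i l|) (fun k j => |γ k j|)
        Mu Meu Mv Mev Met Mw Mr)
      (KissingNumber.zonalKernel K a γ u eu v ev et w r) :=
  sum fun k hk => by
    have hkK : K - k + k = K := Nat.sub_add_cancel (Nat.lt_succ_iff.mp (mem_range.mp hk))
    have hterm := ((het.pow (K - k)).mul (hu.productKernel heu hv hev (K - k) (a k))).mul
      (hw.zonalForm hr k (γ k))
    rwa [← nsmul_add, ← nsmul_add, add_comm n'', ← add_nsmul, hkK] at hterm

lemma threePointKernel (hu : IsBoundedForm n Mu u) (heu : IsBoundedForm n Meu eu)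
    (hv : IsBoundedForm n' Mv v) (hev : IsBoundedForm n' Mev ev) (ht : IsBoundedForm n'' Mt t)
    (het : IsBoundedForm n'' Met et) :
    IsBoundedForm (K • (n + n' + n''))
      (KissingNumber.zonalKernel K (fun k i l => |a k i l|) (fun k j => |γ k j|) Mu Meu Mv Mev Met
        (Mt * (Meu * Mev) + Mu * Mv * Met) ((Meu ^ 2 + Mu ^ 2) * (Mev ^ 2 + Mv ^ 2) * Met ^ 2))
      (KissingNumber.threePointKernel K a γ u eu v ev t et) := by
  have hw := add_comm n'' (n + n') ▸ ht.mul (heu.mul hev)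
  have hr := (((heu.pow 2).sub (hu.pow 2)).mul ((hev.pow 2).sub (hv.pow 2))).mul (het.pow 2)
  rw [← nsmul_add, ← nsmul_add] at hr
  exact hu.zonalKernel heu hv hev het (hw.sub ((hu.mul hv).mul het)) hr

lemma twoPointKernel (hu : IsBoundedForm n Mu u) (he : IsBoundedForm n Meu eu) :
    IsBoundedForm (K • n)
      (KissingNumber.twoPointKernel K (fun k => |c k|) (fun k j => |γ k j|) Mu Meu)
      (KissingNumber.twoPointKernel K c γ u eu) :=
  sum fun k hk => by
    have hkK : K - k + k = K := Nat.sub_add_cancel (Nat.lt_succ_iff.mp (mem_range.mp hk))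
    have hterm := ((he.pow (K - k)).mul (intCast (c k))).mul (hu.zonalForm (he.pow 2) k (γ k))
    rwa [add_zero, ← add_nsmul, hkK] at hterm

end IsBoundedForm

end Bounds

section Substitution

variable {R : Type*} [CommRing R]

/-- With `cosDen`, the homogenization of `cosine`: at `(y / 2, (1 - y) / 2)` these two linear forms
take the values `cosine y` and `1`. -/
def cosNum {ι : Type*} (x : ι × Bool → R) (b : ι) : R := x (b, true) - 2 * x (b, false)

/-- The denominator belonging to `cosNum`. -/
def cosDen {ι : Type*} (x : ι × Bool → R) (b : ι) : R := 2 * x (b, true) + 2 * x (b, false)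

/-- The sum of a three-point kernel over the cyclic permutations of its arguments, after the
substitution of `cosNum` and `cosDen`. -/
def cyclicForm (K : ℕ) (a : ℕ → ℕ → ℕ → ℤ) (γ : ℕ → ℕ → ℤ) (x : Fin 3 × Bool → R) : R :=
  ∑ b, threePointKernel K a γ (cosNum x b) (cosDen x b) (cosNum x (b + 1)) (cosDen x (b + 1))
    (cosNum x (b + 2)) (cosDen x (b + 2))

/-- The total contribution of a three-point and a two-point kernel to a pair of distinct points,
after the substitution of `cosNum` and `cosDen`. -/
def pairForm (K : ℕ) (a : ℕ → ℕ → ℕ → ℤ) (γ : ℕ → ℕ → ℤ) (c : ℕ → ℤ) (δ : ℕ → ℕ → ℤ)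
    (x : Fin 1 × Bool → R) : R :=
  threePointKernel K a γ (cosNum x 0) (cosDen x 0) (cosNum x 0) (cosDen x 0) 1 1 +
    2 * threePointKernel K a γ (cosNum x 0) (cosDen x 0) 1 1 (cosNum x 0) (cosDen x 0) +
    twoPointKernel K c δ (cosNum x 0) (cosDen x 0) * cosDen x 0 ^ K

/-- A bound for the sum of the absolute values of the coefficients of `cyclicForm`: the same
expression with absolute values everywhere, that is, `3` and `4` in place of `cosNum` and `cosDen`,
`84 = 3 * (4 * 4) + 3 * 3 * 4` and `10000 = (4 ^ 2 + 3 ^ 2) * (4 ^ 2 + 3 ^ 2) * 4 ^ 2`. -/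
def cyclicFormNorm (K : ℕ) (a : ℕ → ℕ → ℕ → ℤ) (γ : ℕ → ℕ → ℤ) : ℤ :=
  3 * zonalKernel K (fun k i l => |a k i l|) (fun k j => |γ k j|) 3 4 3 4 4 84 10000

/-- The analogue of `cyclicFormNorm` for `pairForm`. -/
def pairFormNorm (K : ℕ) (a : ℕ → ℕ → ℕ → ℤ) (γ : ℕ → ℕ → ℤ) (c : ℕ → ℤ) (δ : ℕ → ℕ → ℤ) : ℤ :=
  zonalKernel K (fun k i l => |a k i l|) (fun k j => |γ k j|) 3 4 3 4 1 25 625 +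
    2 * zonalKernel K (fun k i l => |a k i l|) (fun k j => |γ k j|) 3 4 1 1 4 24 800 +
    twoPointKernel K (fun k => |c k|) (fun k j => |δ k j|) 3 4 * 4 ^ K

variable {d K : ℕ} {a : ℕ → ℕ → ℕ → ℤ} {c : ℕ → ℤ} {γ δ : ℕ → ℕ → ℤ}

lemma isBoundedForm_cosNum (b : Fin d) : IsBoundedForm (Pi.single b 1) 3 (cosNum X b) :=
  (IsBoundedForm.X (b, true)).sub (IsBoundedForm.X (b, false)).double

lemma isBoundedForm_cosDen (b : Fin d) : IsBoundedForm (Pi.single b 1) 4 (cosDen X b) :=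
  (IsBoundedForm.X (b, true)).double.add (IsBoundedForm.X (b, false)).double

lemma isBoundedForm_cyclicForm :
    IsBoundedForm (fun _ => K) (cyclicFormNorm K a γ) (cyclicForm K a γ X) := by
  have hdegree : ∀ b : Fin 3,
      K • (Pi.single b 1 + Pi.single (b + 1) 1 + Pi.single (b + 2) 1 : Fin 3 → ℕ) = fun _ => K := by
    intro b
    have hone : (Pi.single b 1 + Pi.single (b + 1) 1 + Pi.single (b + 2) 1 : Fin 3 → ℕ) = 1 := by
      revert b; decide
    rw [hone]
    ext
    simp
  have hsum := IsBoundedForm.sum (s := univ) fun b _ => hdegree b ▸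
    (isBoundedForm_cosNum b).threePointKernel (K := K) (a := a) (γ := γ) (isBoundedForm_cosDen b)
      (isBoundedForm_cosNum (b + 1)) (isBoundedForm_cosDen (b + 1)) (isBoundedForm_cosNum (b + 2))
      (isBoundedForm_cosDen (b + 2))
  simpa [cyclicForm, cyclicFormNorm] using hsum

lemma isBoundedForm_pairForm :
    IsBoundedForm (fun _ => K + K) (pairFormNorm K a γ c δ) (pairForm K a γ c δ X) := by
  have hu := isBoundedForm_cosNum (d := 1) 0
  have he := isBoundedForm_cosDen (d := 1) 0
  have hone : IsBoundedForm (d := 1) 0 1 1 := by simpa using IsBoundedForm.intCast (d := 1) 1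
  have hfirst := hu.threePointKernel (K := K) (a := a) (γ := γ) he hu he hone hone
  have hlast := hu.threePointKernel (K := K) (a := a) (γ := γ) he hone hone hu he
  have htwo := (hu.twoPointKernel (K := K) (c := c) (γ := δ) he).mul (he.pow K)
  have hdegree : K • (Pi.single 0 1 + Pi.single 0 1 : Fin 1 → ℕ) = fun _ => K + K := by
    ext b
    simp [Fin.fin_one_eq_zero b, mul_two]
  rw [add_zero, hdegree] at hfirst hlast
  rw [← nsmul_add, hdegree] at htwo
  simpa [pairForm, pairFormNorm] using (hfirst.add hlast.double).add htwo

lemma aeval_cyclicForm (f : Fin 3 × Bool → R) :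
    aeval f (cyclicForm K a γ (X : _ → MvPolynomial (Fin 3 × Bool) ℤ)) = cyclicForm K a γ f := by
  simp only [cyclicForm, cosNum, cosDen, map_sum, map_threePointKernel, map_add, map_sub, map_mul,
    map_ofNat, aeval_X]

lemma aeval_pairForm (f : Fin 1 × Bool → R) :
    aeval f (pairForm K a γ c δ (X : _ → MvPolynomial (Fin 1 × Bool) ℤ)) =
      pairForm K a γ c δ f := by
  simp only [pairForm, cosNum, cosDen, map_threePointKernel, map_twoPointKernel, map_add, map_sub,
    map_mul, map_pow, map_one, map_ofNat, aeval_X]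

end Substitution

/-! ### Bounds from certificates -/

section CertifiedBounds

variable {K W B e : ℕ} {T : ℤ} {a : ℕ → ℕ → ℕ → ℤ} {c : ℕ → ℤ} {γ δ : ℕ → ℕ → ℤ}

/-- The point at which `cosNum` and `cosDen` are `cosine (y b)` and `1`. -/
noncomputable def halfPoint {d : ℕ} (y : Fin d → ℝ) (v : Fin d × Bool) : ℝ :=
  bif v.2 then y v.1 / 2 else (1 - y v.1) / 2

lemma cosNum_halfPoint {d : ℕ} (y : Fin d → ℝ) (b : Fin d) :
    cosNum (halfPoint y) b = cosine (y b) := by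
  simp only [cosNum, halfPoint, cosine, cond_true, cond_false]
  ring

lemma cosDen_halfPoint {d : ℕ} (y : Fin d → ℝ) (b : Fin d) : cosDen (halfPoint y) b = 1 := by
  simp only [cosDen, halfPoint, cond_true, cond_false]
  ring

lemma IsBoundedForm.two_pow_mul_aeval_halfPoint {d N : ℕ} {M : ℤ}
    {p : MvPolynomial (Fin d × Bool) ℤ} (hp : IsBoundedForm (fun _ => N) M p) (y : Fin d → ℝ) :
    2 ^ (N * d) * aeval (halfPoint y) p =
      aeval (fun v => bif v.2 then y v.1 else 1 - y v.1) p := by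
  rw [← hp.aeval_mul]
  congr 2
  ext ⟨b, s⟩
  cases s <;> simp [halfPoint, mul_div_cancel₀]

/-- The coordinate in `[0, 1]` of an inner product in `[-1, 1 / 2]`; the inverse of `cosine`. -/
noncomputable def coordinate (u : ℝ) : ℝ := 2 / 3 * (u + 1)

lemma cosine_coordinate (u : ℝ) : cosine (coordinate u) = u := by
  simp only [cosine, coordinate]
  ring

lemma coordinate_mem_Icc {u : ℝ} (hu : u ∈ Set.Icc (-1) (1 / 2)) :
    coordinate u ∈ Set.Icc 0 1 := by
  simp only [coordinate, Set.mem_Icc] at hu ⊢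
  constructor <;> linarith [hu.1, hu.2]

lemma coordinate_le_coordinate {u v : ℝ} (h : u ≤ v) : coordinate u ≤ coordinate v := by
  simp only [coordinate]
  linarith

lemma two_pow_mul_pairKernel_le {axes : List (Fin 1)}
    (h : IsCertificate W B (K + K) 1 e T (pairFormNorm K a γ c δ)
      (packedCoeffs W (K + K) 1 (pairForm K a γ c δ (kroneckerPoint W (K + K))))
      (fun _ => false) axes)
    {u : ℝ} (hu : u ∈ Set.Icc (-1) (1 / 2)) :
    2 ^ (K + K) * (threePointKernel K a γ u 1 u 1 1 1 + 2 * threePointKernel K a γ u 1 1 1 u 1 +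
      twoPointKernel K c δ u 1) ≤ T := by
  have hp := isBoundedForm_pairForm (K := K) (a := a) (γ := γ) (c := c) (δ := δ)
  have hle := hp.aeval_le_of_isCertificate h (by rw [aeval_pairForm])
    (fun _ => coordinate_mem_Icc hu) (by simp)
  rw [← hp.two_pow_mul_aeval_halfPoint fun _ => coordinate u, aeval_pairForm] at hle
  simpa [pairForm, cosNum_halfPoint, cosDen_halfPoint, cosine_coordinate] using hle

/-- The sum of the three-point kernel over the cyclic permutations of the inner products `u, v, w`
of three unit vectors. -/
def cyclicSum (K : ℕ) (a : ℕ → ℕ → ℕ → ℤ) (γ : ℕ → ℕ → ℤ) (u v w : ℝ) : ℝ :=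
  threePointKernel K a γ u 1 v 1 w 1 + threePointKernel K a γ v 1 w 1 u 1 +
    threePointKernel K a γ w 1 u 1 v 1

lemma cyclicSum_rotate (u v w : ℝ) : cyclicSum K a γ v w u = cyclicSum K a γ u v w := by
  simp only [cyclicSum]
  ring

lemma cyclicSum_swap (u v w : ℝ) : cyclicSum K a γ v u w = cyclicSum K a γ u v w := by
  simp only [cyclicSum, threePointKernel_swap u 1 v 1, threePointKernel_swap w 1 u 1,
    threePointKernel_swap v 1 w 1]
  ring

lemma forall_of_forall_sorted {α : Type*} [LinearOrder α] {C : α → α → α → Prop}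
    (hrotate : ∀ {x y z}, C x y z → C y z x) (hswap : ∀ {x y z}, C x y z → C y x z)
    (hsorted : ∀ {x y z}, x ≤ y → y ≤ z → C x y z) (x y z : α) : C x y z := by
  have hlast : ∀ {x y z}, x ≤ z → y ≤ z → C x y z := fun {x y z} hxz hyz =>
    (le_total x y).elim (fun h => hsorted h hyz) fun h => hswap (hsorted h hxz)
  rcases le_total x z with hxz | hzx
  · rcases le_total y z with hyz | hzy
    · exact hlast hxz hyz
    · exact hrotate (hlast hzy (hxz.trans hzy))
  · rcases le_total y x with hyx | hxy
    · exact hrotate (hrotate (hlast hyx hzx))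
    · exact hrotate (hlast (hzx.trans hxy) hxy)

lemma two_pow_mul_cyclicSum_le_of_sorted {axes : List (Fin 3)}
    (h : IsCertificate W B K 3 e T (cyclicFormNorm K a γ)
      (packedCoeffs W K 3 (cyclicForm K a γ (kroneckerPoint W K))) isInfeasible axes)
    {u : Fin 3 → ℝ} (hu : ∀ b, u b ∈ Set.Icc (-1) (1 / 2)) (h01 : u 0 ≤ u 1) (h12 : u 1 ≤ u 2)
    (hgram : 0 ≤ 1 + 2 * u 0 * u 1 * u 2 - u 0 ^ 2 - u 1 ^ 2 - u 2 ^ 2) :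
    2 ^ (K * 3) * cyclicSum K a γ (u 0) (u 1) (u 2) ≤ T := by
  have hp := isBoundedForm_cyclicForm (K := K) (a := a) (γ := γ)
  have hsq : ∀ b, cosine (coordinate (u b)) ^ 2 ≤ 1 := fun b => by
    rw [cosine_coordinate, sq_le_one_iff_abs_le_one, abs_le]
    exact ⟨(hu b).1, (hu b).2.trans (by norm_num)⟩
  have hle := hp.aeval_le_of_isCertificate h (by rw [aeval_cyclicForm])
    (fun b => coordinate_mem_Icc (hu b)) fun _ => not_forall_mem_of_isInfeasible hsq
      (coordinate_le_coordinate h01) (coordinate_le_coordinate h12)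
      (by simpa only [cosine_coordinate] using hgram)
  rw [← hp.two_pow_mul_aeval_halfPoint fun b => coordinate (u b), aeval_cyclicForm] at hle
  simp only [cyclicForm, cosNum_halfPoint, cosDen_halfPoint, cosine_coordinate,
    Fin.sum_univ_three] at hle
  exact hle

lemma two_pow_mul_cyclicSum_le {axes : List (Fin 3)}
    (h : IsCertificate W B K 3 e T (cyclicFormNorm K a γ)
      (packedCoeffs W K 3 (cyclicForm K a γ (kroneckerPoint W K))) isInfeasible axes)
    {u v w : ℝ} (hu : u ∈ Set.Icc (-1) (1 / 2)) (hv : v ∈ Set.Icc (-1) (1 / 2))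
    (hw : w ∈ Set.Icc (-1) (1 / 2))
    (hgram : 0 ≤ 1 + 2 * u * v * w - u ^ 2 - v ^ 2 - w ^ 2) :
    2 ^ (K * 3) * cyclicSum K a γ u v w ≤ T := by
  refine forall_of_forall_sorted (C := fun u v w : ℝ =>
    u ∈ Set.Icc (-1) (1 / 2) → v ∈ Set.Icc (-1) (1 / 2) → w ∈ Set.Icc (-1) (1 / 2) →
      0 ≤ 1 + 2 * u * v * w - u ^ 2 - v ^ 2 - w ^ 2 →
        2 ^ (K * 3) * cyclicSum K a γ u v w ≤ T)
    ?_ ?_ ?_ u v w hu hv hw hgram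
  · intro x y z hxyz hy hz hx hgram
    rw [cyclicSum_rotate]
    exact hxyz hx hy hz (by linarith)
  · intro x y z hxyz hy hx hz hgram
    rw [cyclicSum_swap]
    exact hxyz hx hy hz (by linarith)
  · intro x y z hxy hyz hx hy hz hgram
    exact two_pow_mul_cyclicSum_le_of_sorted (u := ![x, y, z]) h
      (Fin.forall_fin_succ.mpr ⟨hx, Fin.forall_fin_succ.mpr ⟨hy, Fin.forall_fin_one.mpr hz⟩⟩)
      hxy hyz hgram

end CertifiedBounds

section CertifiedCard

variable {E : Type*} [NormedAddCommGroup E] [InnerProductSpace ℝ E]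
  {m K W W' B B' e e' : ℕ} {T T' : ℤ} {a : ℕ → ℕ → ℕ → ℤ} {c : ℕ → ℤ} {γ δ : ℕ → ℕ → ℤ}
  {axes : List (Fin 3)} {axes' : List (Fin 1)}

theorem card_bound_of_isCertificate (hm : Module.finrank ℝ E = m + 1)
    (hγ : ∀ k ≤ K, IsZonalSeq m k fun j => γ k j)
    (hδ : ∀ k ≤ K, IsZonalSeq (m + 1) k fun j => δ k j) (hc : ∀ k, 0 ≤ c k)
    (htriple : IsCertificate W B K 3 e T (cyclicFormNorm K a γ)
      (packedCoeffs W K 3 (cyclicForm K a γ (kroneckerPoint W K))) isInfeasible axes)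
    (hpair : IsCertificate W' B' (K + K) 1 e' T' (pairFormNorm K a γ c δ)
      (packedCoeffs W' (K + K) 1 (pairForm K a γ c δ (kroneckerPoint W' (K + K))))
      (fun _ => false) axes')
    {S : Finset E} (hS : S.Nonempty) (hnorm : ∀ x ∈ S, ‖x‖ = 1)
    (hdist : ∀ x ∈ S, ∀ y ∈ S, x ≠ y → 1 ≤ dist x y) :
    -T / 2 ^ (K * 3) * ((#S - 1) * (#S - 2)) ≤
      3 * (threePointKernel K a γ 1 1 1 1 1 1 + twoPointKernel K c δ 1 1 +
        (#S - 1) * (T' / 2 ^ (K + K)) : ℝ) := by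
  have : FiniteDimensional ℝ E := .of_finrank_pos (by lia)
  have hinner : ∀ x ∈ S, ∀ y ∈ S, x ≠ y → ⟪x, y⟫ ∈ Set.Icc (-1 : ℝ) (1 / 2) :=
    fun x hx y hy hxy =>
      inner_mem_Icc_of_one_le_dist (hnorm x hx) (hnorm y hy) (hdist x hx y hy hxy)
  have hself : ∀ x ∈ S, ⟪x, x⟫ = (1 : ℝ) := fun x hx => by simp [hnorm x hx]
  refine three_point_inequality hS
    (F := fun x y z => threePointKernel K a γ ⟪x, z⟫ 1 ⟪y, z⟫ 1 ⟪x, y⟫ 1)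
    (P := fun x y => twoPointKernel K c δ ⟪x, y⟫ 1)
    (fun z hz => sum_sum_threePointKernel_nonneg hm hγ hnorm (hnorm z hz))
    (sum_sum_twoPointKernel_nonneg (hm ▸ hδ) hc hnorm)
    (fun x y => by rw [real_inner_comm]) (fun x hx => by simp only [hself x hx, le_refl]) ?_ ?_
  · intro x hx y hy hxy
    rw [le_div_iff₀' (by positivity)]
    refine (congrArg _ ?_).trans_le (two_pow_mul_pairKernel_le hpair (hinner x hx y hy hxy))
    simp only [hself x hx, real_inner_comm x y, threePointKernel_swap 1 1 ⟪x, y⟫ 1]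
    ring
  · intro x hx y hy z hz hxy hyz hxz
    rw [neg_div, neg_neg, le_div_iff₀' (by positivity)]
    refine (congrArg _ ?_).trans_le (two_pow_mul_cyclicSum_le htriple (hinner x hx z hz hxz)
      (hinner y hy z hz hyz) (hinner x hx y hy hxy)
      (gram_det_nonneg (hnorm x hx) (hnorm y hy) (hnorm z hz)))
    simp only [cyclicSum, real_inner_comm x y, real_inner_comm y z, real_inner_comm x z]
    ring

end CertifiedCard

/-! ### The certificate in dimension eleven -/

section DimensionEleven

/-- The zonal sequence with initial value `c`, provided that the divisions are exact. -/
def zonalSeq (m k : ℕ) (c : ℤ) : ℕ → ℤ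
  | 0 => c
  | j + 1 =>
    -(zonalSeq m k c j * ((k - 2 * j) * (k - 2 * j - 1))) / (2 * (j + 1) * (2 * k - 2 * j + m - 4))

/-- The coefficients of the Gegenbauer polynomial of degree `k` for dimension `10`. -/
def gegenbauerTen (k : ℕ) : ℕ → ℤ := zonalSeq 10 k (2 ^ k * (k + 3).choose 3)

/-- The coefficients of the Gegenbauer polynomial of degree `k` for dimension `11`, multiplied by
`105 * 2 ^ k` in order to be integers. -/
def gegenbauerEleven (k : ℕ) : ℕ → ℤ := zonalSeq 11 k (2 ^ k * (2 * k + 7)‼ / k !)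

/-- A numerical solution of the Bachoc–Vallentin semidefinite program for dimension `11`, in the
form of rounded Cholesky factors: the `k`-th entry lists the rows of a lower triangular matrix `L`
for which `L ^ T * L` is the coefficient matrix of the zonal form of degree `k`. -/
def threePointRows : List (List (List ℤ)) :=
  [[[166512],
   [7021, 139021696],
   [-38498535, 17072667, 422495660],
   [20021595, -328382470, -218854659, 1169530885],
   [65273967, -138430006, -1225872028, 413509213, 2206078505],
   [-17175858, 208109940, 456097424, -3065767090, -1158587066, 6039438492],
   [100659552, 89247941, -1997715409, 1562492768, 2656214061, -5094842871, 3567422870],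
   [-213018704, -184851805, 4031851114, 1935509060, -4568585246, -16607154508, -8416603873,
     29625955736],
   [-14474598, 57442833, 208926080, -746916430, 2161439623, 1061522056, -13660985954, 1335901747,
     14094242124],
   [335634278, 17942521, -7189724539, -4913080727, 14467745136, 41843863803, 5342598905,
     -93008198766, -12395404822, 54599471310],
   [-220559000, 327134143, 3367662289, -13928417346, -3526319045, 60151141530, 15208896384,
     -87220561126, -85328518151, 54945939886, 69763487880],
   [-118386007, 2010698147, 10282516746, -4875304544, -88981264684, -298145439503, 288651651350,
     1499897340967, -434570929918, -2350424017495, 232939962266, 1182146099436],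
   [1409534076, 1644538529, -17733684121, 56286622783, 7048500168, -592460901750, -247170999655,
     1986890689524, 1617093704354, -2690852020410, -2756181383651, 1258780890564, 1417790873779],
   [2081034, -914209345, -8175583117, -72200516142, 89176817482, 779812635393, -299607259178,
     -3312864632628, -63519510977, 7318628612834, 1389183365924, -8254061211774, -1061506582137,
     3410359331832],
   [911554410, -10846262, -15597835620, -26002130302, -9213206346, 373972698348, 614045393413,
     -2360028819777, -4103435965359, 6904071296908, 11193154215237, -9036970895206, -12555658373668,
     4069994158159, 4928979542015],
   [495457123, 4006513543, -9955383394, -59930571688, -74391995017, -62348409637, 1390315312400,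
     3870959387138, -6874912002897, -21234151556569, 15275617336512, 47933382128935,
     -16273688727698, -47674755298801, 6506639549053, 17364248291766],
   [-421365165, -678011376, 15694873670, 72652567175, -68953628974, -1427717457789, -1051577807956,
     10441311174950, 12084679834245, -37355812194592, -49334125004154, 69151580586673,
     95615650331716, -63266447686308, -87048600588454, 22270172820972, 29820788042070]],
  [[79946123],
   [-19809227, 178371685],
   [-102771860, 53009256, 883892805],
   [63625371, -471167700, -302160123, 1740799850],
   [166336119, 147029244, -3317193977, -229833454, 6183774201],
   [-43347892, 522306534, 33488029, -5817025800, 1320517950, 6815330865],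
   [42333362, 326113630, 1581305686, -2044021556, -10145480320, 844185123, 17053567428],
   [-352491068, 72199672, -3418449795, -3549281189, 26691056632, 230895123, -45091087737,
     24871194149],
   [292355836, -1128868154, -1105374927, 21241358878, -2359354872, -39737579305, -46972019721,
     8105732973, 87243804231],
   [-305013230, -4663963473, 6708055073, 48620675559, 57673296942, -31735499562, -354733589602,
     -228612615675, 350023899454, 303706733496],
   [309776498, -822715097, 8174904660, -13274450423, -136168478355, 91937395493, 643377318441,
     -165492720751, -1231928324331, 100078079719, 797308548949],
   [116182367, 810294365, 1839440174, 3687942948, -8697482517, -223540290925, 32670650749,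
     1399018470137, 136128837185, -3115630240712, -95751161267, 2026287563778],
   [38712439, -1096817398, -6821592633, 16076714941, 92235600828, -308988164858, -676688582103,
     1728218130356, 3324712638249, -3325835226247, -7069008408396, 2222712020728, 4682712396665],
   [-201082368, 4065491253, 1561505202, 837809721, 184680777353, -107474180850, -2232028489164,
     -802807844135, 9512134505311, 6636621170011, -16477638766544, -13150147776809, 9632185275239,
     8087091109918],
   [-9438382, -847218665, -13404764697, -10550637933, 170224578421, 644864560510, 226183343325,
     -4826148857328, -7049853894003, 13448760031385, 24181868706669, -16229029330076,
     -30633164536973, 7067212493340, 13258626460969],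
   [-58977799, 1203986625, 13057321387, -21235220511, -371077803026, 79169509471, 4143491811875,
     2163378176475, -21189283127503, -18766226715069, 52985893968560, 56558275616275,
     -63154830173206, -72467092926771, 28520786163412, 33479476473029]],
  [[58214681],
   [-3069123, 273848115],
   [31720250, 75915142, 351260685],
   [-10067619, -631797040, -383470125, 2578740292],
   [138035012, 104017917, -1738589086, -140663272, 2658435234],
   [-333165073, -81854942, 4040872759, -3308979725, -5840700201, 8883258393],
   [582840427, 8679305, -8514429728, 6292853712, 4255022378, -12550551932, 24945784664],
   [170004817, 923927508, 1082701069, -4637458420, 398699789, -2391605142, -1005445278,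
     17447060472],
   [-587985857, -1628809615, 2305614730, 23439132703, 25467550803, -103091013459, -165719246143,
     105609502086, 191178202298],
   [-458669777, 1097333212, -581514099, -37955161294, 10114566032, 312034345043, -33695711443,
     -849485510060, 39110993879, 671827621372],
   [-201137102, -709805339, 1977475252, -29823019436, -67610808897, 296423147304, 548286323382,
     -699835050074, -1611057752534, 562296596178, 1324991169442],
   [77597801, 65681088, 4606980384, -3243505539, -121718792579, -100289207164, 836079665142,
     1249503019452, -1833608893461, -3721785362076, 1329985578312, 2992515179397],
   [418014885, -397236152, -1808595812, 2541505196, -67483093374, -376822574420, 60511188025,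
     2765514728600, 2073000553422, -6216269506412, -5866257166911, 4280846002760, 4277271927290],
   [-215671794, -1503404074, 1737568115, 51549658301, 130790119438, -167254685533, -1773332805005,
     -1534253368534, 8218576127746, 10657285743931, -15552820474468, -21247435959116,
     10032809655939, 13470183936123],
   [-134902384, 182024156, 671473863, -70286913404, 74614096122, 1255072367683, 150047939142,
     -8284625480809, -5489401594368, 25374379883366, 23448466283492, -35760505908081,
     -37347080245558, 18586621180571, 20295945724413]],
  [[37939432],
   [57483493, 253449294],
   [14641772, 41400368, 940600157],
   [-744059, 245082492, -405114001, 1331001267],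
   [-23112253, -137359875, 69087149, -762470018, 347122541],
   [-17163801, 215751230, -928281612, -4157244997, 5352407545, 7918068809],
   [-111611744, -296060811, -1269223046, -5776832478, 4699753431, 14303723365, 6767981110],
   [93229635, 122830736, 2675636221, 15541429010, -36435852628, -52696899929, 45520281572,
     63714554291],
   [202954090, -1567797904, -1063966474, 19007245494, 79944667259, -13438786046, -343058827409,
     -25491314722, 331964231864],
   [105909886, -1926726926, 3443141872, 13462044932, 14569878673, -42979089354, -243035811858,
     -216653522400, 405606570081, 480325874733],
   [-278829281, -1375830905, -7312278127, -5927190612, 82654975287, 246155922014, -117132578653,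
     -1002420730758, -658906045386, 1067703750505, 1107894369423],
   [-35465600, -565945015, -4542889838, -23134751121, -64196802166, 86650915726, 1022080565792,
     612675090112, -3693201489347, -3354599971256, 3668148822997, 3683540999311],
   [47401077, -257585206, 5991941969, 22973481095, -44737333414, -477218284187, -468688141247,
     2646872356320, 4086096613107, -5424194741543, -8937809695173, 3637264363162, 5883690761789],
   [-23941625, 1387767207, -14745969497, 3646118478, 285735976694, 12102866935, -2420174389612,
     -1751171198597, 9343638335659, 10161009411471, -15449881988305, -19413887696945, 8919076488190,
     11880087709580]],
  [[44685178],
   [-18726476, 236724889],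
   [-10281919, -62535203, 72177914],
   [-3578611, -43684589, 19569443, 23807483],
   [47508253, -128946348, -366003477, -72933333, 168358956],
   [-128839, 106675631, -100257949, -225699465, 451219950, 992390916],
   [49540756, -23292376, -160755124, -8135353583, -15620515864, 27716634412, 50248302225],
   [-81776086, 204315172, 1618764421, 7248310024, -2337616536, -37955713197, 2591404722,
     52228624364],
   [-101823118, -379398567, -652393539, 22274984909, 20826630929, -123233781597, -92743501324,
     178486931370, 117140784099],
   [-74602204, 269346023, -1862935175, 8190853585, 70841766174, 1409214313, -327731039437,
     -200012112334, 403856249254, 357353095947],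
   [-174768037, 150264334, -6495413734, -5171412635, 39181682554, 193141727805, 39098582636,
     -989461962273, -925460216572, 1166158010908, 1302406260250],
   [45063814, 819056426, 1304325643, -33044950579, -93662609610, 118626593445, 955072681886,
     623912580711, -3206277627748, -3446859166953, 3170549818082, 3688991269992],
   [268822913, -652550125, -668200456, 41042745740, -55712350114, -704215685206, -123605890329,
     4151668809653, 3072467439673, -9793691681876, -9638275728856, 7779442614190, 8526757606718]],
  [[19836196],
   [-10829600, 9182611],
   [12758295, -6123594, 12370683],
   [-10842374, -1643625, -22642634, 23060806],
   [-4647541, -95519724, -72114931, -32900299, 619992971],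
   [-27495869, 222348519, -891086224, -2466669771, 3588791260, 9443953830],
   [20868179, 173288725, 208739658, -2866045563, -6076328471, 10689640005, 18505864764],
   [-3473666, 185688029, 140530411, -4010742630, -9154460951, 12112771912, 31976178747,
     11238244169],
   [117496417, 517341681, 626869580, 5466635093, -11190334480, -81618965761, -18658072983,
     246007493759, 206572971346],
   [40223885, 298275679, 266391692, 13885171399, 56256202192, -52286921316, -496719228963,
     -232935898442, 1031055326928, 948012622090],
   [-147315382, 690312754, -6271966448, -13269956578, 38542756762, 155749299908, 48111788017,
     -719721741833, -698722800658, 1208212525152, 1331612791266],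
   [-39312192, -66484335, 5978636781, -6440864298, -118386029281, 15029540892, 1068372680316,
     688615498673, -3702582980199, -3708437153017, 3787242374615, 4305871389515]],
  [[1290517],
   [-19145, 1215786],
   [646914, 173945, 1694457],
   [-184628, -1016638, -1702262, 5173321],
   [546177, -1714097, -14365303, 6477004, 57770306],
   [667511, 8022548, 8311103, -118878447, -27292022, 338790450],
   [-3255713, -343525, -64611738, -392676342, -506905182, 1645086034, 2804268407],
   [1670570, 19439406, 86235907, -369839586, -1647945375, -392259788, 5379003446, 6089807548],
   [21622512, 18532573, 1582606460, 6933371252, -8479540903, -80089423611, -31151735356,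
     204422952615, 174486081602],
   [-39365651, -138370639, -2655577988, -7336055743, 18530232281, 94714948882, -17385255431,
     -273058961016, -82667347635, 107751425729],
   [25173281, 424164790, 838126953, -12363827971, -15383356501, 111489985065, 166871470199,
     -322475253215, -558911852516, 177268679381, 370411485547]],
  [[197400],
   [-6656, 305624],
   [-26957, 108692, 858011],
   [17458, -789750, -604501, 6064665],
   [113220, 290242, -6508982, -4021471, 32536228],
   [63536, 665526, -5226731, -21879873, 20995060, 75279764],
   [-8656, 862482, -304086, -46882813, -84142115, 183022539, 323966060],
   [-49303, 1513557, 12061098, -63535186, -437803507, -207671652, 1577704913, 1719199539],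
   [-55762, -1111454, 8070173, 73783180, -186272469, -1441214374, -556739853, 4658378959,
     4691592634],
   [62031, -1591083, -7114217, 103688088, 365685866, -1382358473, -5577049213, 633442787,
     16840528507, 13460956941]],
  [[42341],
   [-3009, 211292],
   [-61819, 91430, 1715510],
   [-68314, -2262181, 2549645, 21972374],
   [176053, 2149056, -8655650, -23809587, 24922242],
   [118050, 1381368, -7558237, -27401073, 25298521, 60577229],
   [-169226, -938870, 8094580, -22498223, -102391751, 165165994, 308420753],
   [766464, 11970718, -17994813, -168759682, -645566605, -796997934, 2718671748, 3797201397],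
   [-14289781, -160758387, 702846574, 3167399557, -4650498180, -43379402492, -38982835205,
     152867805188, 195075407540]],
  [[28077],
   [-3803, 324420],
   [-332224, -357031, 10108224],
   [547616, -92240, -16203062, 6964129],
   [-149055, -211066, 2603378, -3733386, 17372233],
   [-964149, 850131, 23834725, -42336643, 23044579, 121258373],
   [159934, 1096105, -4178182, -41027315, -82202786, 162183101, 302568101],
   [-28096288, 28975384, 906484857, -1535882392, -6115651673, -2745694812, 23292957480,
     29649581031]],
  [[42891],
   [1456, 398813],
   [-22585, 65629, 774172],
   [20021, -322917, -230827, 2448664],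
   [27559, -15362, -2319597, -1086058, 11713913],
   [43273, 416950, -3756591, -16256354, 13890830, 60601006],
   [-4822, 572617, 922540, -27367612, -59933449, 104824834, 217196586]],
  [[71593],
   [-3892, 168038],
   [-7923, 61402, 669877],
   [10904, -184273, -153947, 1857687],
   [32858, -11485, -2347223, -1039990, 11621331],
   [21104, 295616, -1916052, -12138008, 6028647, 47331423]],
  [[22228],
   [-2103, 124185],
   [-15301, 60274, 599727],
   [8122, -163320, -73874, 1870023],
   [20975, 2835, -1608157, -862491, 8752193]],
  [[16322],
   [-2299, 106636],
   [-13247, 49436, 527536],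
   [5699, -154464, -8539, 1900826]],
  [[13351],
   [-2063, 97972],
   [-12412, 38440, 509722]],
  [[11918],
   [-1721, 91044]],
  [[11148]]]

/-- The entries of the matrices `threePointRows`. -/
def threePointFactor (k i l : ℕ) : ℤ := ((threePointRows.getD k []).getD i []).getD l 0

/-- The weights of the zonal forms in the two-point part of the solution. -/
def twoPointWeight (k : ℕ) : ℤ :=
  [0, 327299388, 4048418, 254183195, 65437808, 49057122, 102493, 27931, 4261, 1875, 1916, 2087, 463,
    231, 130, 79, 50].getD k 0 ^ 2

/-- The bound for a sum of three-point kernels over the cyclic permutations of a triple. -/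
def tripleBound : ℤ := -18039 * 10 ^ 14

/-- The bound for the total contribution of a pair. -/
def pairBound : ℤ := 467536 * 10 ^ 15

lemma isZonalSeq_intCast {m k : ℕ} {γ : ℕ → ℤ} (hpos : 0 < γ 0)
    (hrec : ∀ j < k, 2 * j + 2 ≤ k → γ (j + 1) * (2 * (j + 1) * (2 * k - 2 * j + m - 4)) =
      -γ j * ((k - 2 * j) * (k - 2 * j - 1))) : IsZonalSeq m k fun j => γ j where
  pos := Int.cast_pos.mpr hpos
  recurrence j hj := mod_cast hrec j (by lia) hj

lemma isZonalSeq_gegenbauerTen {k : ℕ} (hk : k ≤ 16) :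
    IsZonalSeq 10 k fun j => gegenbauerTen k j := by
  refine isZonalSeq_intCast ?_ ?_ <;> revert k <;> decide +kernel

lemma isZonalSeq_gegenbauerEleven {k : ℕ} (hk : k ≤ 16) :
    IsZonalSeq 11 k fun j => gegenbauerEleven k j := by
  refine isZonalSeq_intCast ?_ ?_ <;> revert k <;> decide +kernel

lemma kernels_one_lt :
    3 * (threePointKernel 16 threePointFactor gegenbauerTen 1 1 1 1 1 1 +
      twoPointKernel 16 twoPointWeight gegenbauerEleven 1 1) <
      -tripleBound * (870 * 869) - 3 * pairBound * 870 := by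
  decide +kernel

lemma twoPointWeight_nonneg (k : ℕ) : 0 ≤ twoPointWeight k := sq_nonneg _

lemma kernels_one_lt_real :
    3 * (threePointKernel 16 threePointFactor gegenbauerTen 1 1 1 1 1 1 +
      twoPointKernel 16 twoPointWeight gegenbauerEleven 1 1 : ℝ) <
      -tripleBound * (870 * 869) - 3 * pairBound * 870 := by
  have hthree := map_threePointKernel (K := 16) (a := threePointFactor) (γ := gegenbauerTen)
    (Int.castRingHom ℝ) 1 1 1 1 1 1
  have htwo := map_twoPointKernel (K := 16) (c := twoPointWeight) (γ := gegenbauerEleven)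
    (Int.castRingHom ℝ) 1 1
  simp only [map_one, eq_intCast] at hthree htwo
  rw [← hthree, ← htwo]
  exact_mod_cast kernels_one_lt

lemma isCertificate_pair : IsCertificate 400 62 32 1 52 (pairBound * 2 ^ 32)
    (pairFormNorm 16 threePointFactor gegenbauerTen twoPointWeight gegenbauerEleven)
    (packedCoeffs 400 32 1
      (pairForm 16 threePointFactor gegenbauerTen twoPointWeight gegenbauerEleven
        (kroneckerPoint 400 32)))
    (fun _ => false) (List.replicate 10 0) where
  width_ne_zero := by decide
  norm_lt := by decide +kernel
  gap_mem_Ico := by decide +kernel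
  certifies := by decide +kernel

set_option maxRecDepth 100000 in
lemma isCertificate_triple : IsCertificate 200 58 16 3 86 (tripleBound * 2 ^ 48)
    (cyclicFormNorm 16 threePointFactor gegenbauerTen)
    (packedCoeffs 200 16 3
      (cyclicForm 16 threePointFactor gegenbauerTen (kroneckerPoint 200 16)))
    isInfeasible (List.replicate 10 [2, 1, 0]).flatten where
  width_ne_zero := by decide
  norm_lt := by decide +kernel
  gap_mem_Ico := by decide +kernel
  certifies := by decide +kernel

end DimensionEleven

end KissingNumber

open KissingNumber in
theorem kissing_number_dim11_le_870_general {E : Type*} [NormedAddCommGroup E]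
    [InnerProductSpace ℝ E] (hE : Module.finrank ℝ E = 11) (S : Finset E)
    (hnorm : ∀ x ∈ S, ‖x‖ = 1) (hdist : ∀ x ∈ S, ∀ y ∈ S, x ≠ y → 1 ≤ dist x y) :
    S.card ≤ 870 := by
  by_contra! hcard
  obtain ⟨S', hsub, hcard'⟩ := exists_subset_card_eq (Nat.succ_le_of_lt hcard)
  have hbound := card_bound_of_isCertificate (m := 10) hE (fun _ => isZonalSeq_gegenbauerTen)
    (fun _ => isZonalSeq_gegenbauerEleven) twoPointWeight_nonneg isCertificate_triple
    isCertificate_pair (card_pos.mp (hcard' ▸ Nat.succ_pos 870)) (fun x hx => hnorm x (hsub hx))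
    fun x hx y hy => hdist x (hsub hx) y (hsub hy)
  rw [hcard'] at hbound
  push_cast at hbound
  linarith [kernels_one_lt_real]

theorem kissing_number_dim11_le_870
    (S : Finset (EuclideanSpace ℝ (Fin 11)))
    (hnorm : ∀ x ∈ S, ‖x‖ = 1)
    (hdist : ∀ x ∈ S, ∀ y ∈ S, x ≠ y → 1 ≤ dist x y) :
    S.card ≤ 870 :=
  kissing_number_dim11_le_870_general finrank_euclideanSpace_fin S hnorm hdist
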